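/- Assume the Riemann Hypothesis. Then for all x ≥ 100, |H(x)| ≤ ( 0.0462 / (√x·(log x)²) ) · ( 1 + 4/log x ). -/

import Mathlib

open Filter

/-- `R(x) = ∑_{n ≤ x} Λ(n)/n - log x + γ`. -/
noncomputable def Rfun (x : ℝ) : ℝ :=
  (∑ n ∈ Finset.Icc 1 ⌊x⌋₊, ArithmeticFunction.vonMangoldt n / n) -
    Real.log x + Real.eulerMascheroniConstant

/-- `H(x) = ∫_x^∞ R(t)/(t (log t)^2) dt`. -/
noncomputable def Hfun (x : ℝ) : ℝ :=
  ∫ t in Set.Ioi x, Rfun t / (t * (Real.log t) ^ 2)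

open Topology MeasureTheory Complex

theorem log_one_add_inv_lower {a : ℝ} (ha : 0 < a) :
    2 * (1 / (2 * a + 1)) + 2 / 3 * (1 / (2 * a + 1)) ^ 3 ≤ Real.log (1 + a⁻¹) := by
  have h := Real.hasSum_log_one_add_inv ha
  have h2 := sum_le_hasSum (Finset.range 2) (fun i _ => by positivity) h
  simp [Finset.sum_range_succ] at h2
  refine le_trans (le_of_eq ?_) h2
  field_simp
  ring

theorem eulerMascheroniConstant_le_harmonic_sub_log {n : ℕ} (hn : 1 ≤ n) :
    Real.eulerMascheroniConstant ≤
      (harmonic n : ℝ) - Real.log n - 1 / (2 * n) + 1 / (12 * (n : ℝ) ^ 2) := by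
  set a : ℕ → ℝ := fun k =>
    (harmonic k : ℝ) - Real.log k - 1 / (2 * k) + 1 / (12 * (k : ℝ) ^ 2) with ha
  have hlim : Tendsto a atTop (𝓝 Real.eulerMascheroniConstant) := by
    have h1 := Real.tendsto_harmonic_sub_log
    have h2 : Tendsto (fun k : ℕ => (1 : ℝ) / (2 * k)) atTop (𝓝 0) :=
      Tendsto.div_atTop tendsto_const_nhds
        (Tendsto.const_mul_atTop (by norm_num) tendsto_natCast_atTop_atTop)
    have h3 : Tendsto (fun k : ℕ => (1 : ℝ) / (12 * (k : ℝ) ^ 2)) atTop (𝓝 0) :=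
      Tendsto.div_atTop tendsto_const_nhds
        (Tendsto.const_mul_atTop (by norm_num)
          ((tendsto_pow_atTop (by norm_num)).comp tendsto_natCast_atTop_atTop))
    simpa [ha] using (h1.sub h2).add h3
  have hstep : ∀ k : ℕ, 1 ≤ k → a (k + 1) ≤ a k := by
    intro k hk
    have hk' : (0 : ℝ) < k := by exact_mod_cast hk
    have hl := log_one_add_inv_lower hk'
    have hlog : Real.log (1 + (k : ℝ)⁻¹) = Real.log ((k : ℝ) + 1) - Real.log k := by
      rw [← Real.log_div (by positivity) (by positivity)]
      congr 1
      field_simp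
    rw [hlog] at hl
    simp only [ha, harmonic_succ]
    push_cast
    suffices h : ((k : ℝ) + 1)⁻¹ - 1 / (2 * (k + 1)) + 1 / (12 * ((k : ℝ) + 1) ^ 2)
        + 1 / (2 * k) - 1 / (12 * (k : ℝ) ^ 2)
        ≤ 2 * (1 / (2 * (k : ℝ) + 1)) + 2 / 3 * (1 / (2 * (k : ℝ) + 1)) ^ 3 by
      linarith
    rw [← sub_nonneg]
    have : 2 * (1 / (2 * (k : ℝ) + 1)) + 2 / 3 * (1 / (2 * (k : ℝ) + 1)) ^ 3 -
        (((k : ℝ) + 1)⁻¹ - 1 / (2 * (k + 1)) + 1 / (12 * ((k : ℝ) + 1) ^ 2)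
        + 1 / (2 * k) - 1 / (12 * (k : ℝ) ^ 2)) =
        (2 * (k : ℝ) ^ 2 + 2 * k + 1) /
          (12 * (k : ℝ) ^ 2 * ((k : ℝ) + 1) ^ 2 * (2 * k + 1) ^ 3) := by
      field_simp
      ring
    rw [this]
    positivity
  have hanti : Antitone fun k => a (k + n) :=
    antitone_nat_of_succ_le fun k => by
      have := hstep (k + n) (by omega)
      rwa [show k + 1 + n = k + n + 1 by ring]
  have := hanti.le_of_tendsto ((tendsto_add_atTop_iff_nat n).2 hlim) 0
  simpa [ha] using this

theorem lt_log_pi : 1.144729 < Real.log Real.pi := by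
  rw [Real.lt_log_iff_exp_lt Real.pi_pos]
  have h1 := Real.exp_one_lt_d9
  have h2 : Real.exp 0.144729 ≤ 1.1557265 := by
    have := Real.exp_bound' (x := 0.144729) (by norm_num) (by norm_num) (n := 7) (by norm_num)
    refine this.trans ?_
    norm_num [Finset.sum_range_succ, Nat.factorial]
  have h3 := Real.pi_gt_d6
  rw [show (1.144729 : ℝ) = 1 + 0.144729 by norm_num, Real.exp_add]
  have := mul_le_mul h1.le h2 (Real.exp_pos _).le (by norm_num)
  refine this.trans_lt (lt_trans ?_ h3)
  norm_num

theorem eulerMascheroniConstant_sub_log_four_pi_le :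
    Real.eulerMascheroniConstant - Real.log (4 * Real.pi) ≤ -1.9538015 := by
  have h1 := eulerMascheroniConstant_le_harmonic_sub_log (n := 16) (by norm_num)
  have h2 := lt_log_pi
  have h3 := Real.log_two_gt_d9
  have h4 : Real.log (4 * Real.pi) = 2 * Real.log 2 + Real.log Real.pi := by
    rw [Real.log_mul (by norm_num) Real.pi_ne_zero, show (4 : ℝ) = 2 ^ 2 by norm_num, Real.log_pow]
    norm_num
  have h5 : Real.log ((16 : ℕ) : ℝ) = 4 * Real.log 2 := by
    rw [show ((16 : ℕ) : ℝ) = 2 ^ 4 by norm_num, Real.log_pow]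
    norm_num
  rw [h5] at h1
  rw [h4]
  have h6 : (harmonic 16 : ℝ) = 2436559 / 720720 := by
    norm_num [harmonic, Finset.sum_range_succ]
  rw [h6] at h1
  norm_num at h1 h2 h3 ⊢
  linarith

/-- The weight `(1 + ‖z‖²)^p`. -/
noncomputable def normWeight (p : ℝ) (z : ℂ) : ℝ := (1 + ‖z‖ ^ 2) ^ p

theorem normWeight_pos (p : ℝ) (z : ℂ) : 0 < normWeight p z := by
  unfold normWeight; positivity

theorem normWeight_add (p q : ℝ) (z : ℂ) :
    normWeight (p + q) z = normWeight p z * normWeight q z :=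
  Real.rpow_add (by positivity) _ _

theorem norm_sq_add_mul_I (a y : ℝ) : ‖(a + y * I : ℂ)‖ ^ 2 = a ^ 2 + y ^ 2 := by
  rw [← normSq_eq_norm_sq, normSq_apply]
  simp
  ring

theorem normWeight_vertical_le {p q r : ℝ} (hp : 0 ≤ p) (hq : 0 ≤ q) (hr : r = p + q) {a : ℝ}
    (ha : 0 < a) (y : ℝ) :
    normWeight (-r) (a + y * I) ≤ (a ^ 2) ^ (-p) * (1 + y ^ 2) ^ (-q) := by
  rw [hr, neg_add, normWeight_add]
  unfold normWeight
  rw [norm_sq_add_mul_I]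
  refine mul_le_mul ?_ ?_ (by positivity) (by positivity)
  · exact Real.rpow_le_rpow_of_nonpos (by positivity) (by nlinarith [sq_nonneg y]) (by linarith)
  · exact Real.rpow_le_rpow_of_nonpos (by positivity) (by nlinarith [sq_nonneg a]) (by linarith)

theorem normWeight_vertical_le' {q : ℝ} (hq : 0 ≤ q) (a y : ℝ) :
    normWeight (-q) (a + y * I) ≤ (1 + y ^ 2) ^ (-q) := by
  unfold normWeight
  rw [norm_sq_add_mul_I]
  exact Real.rpow_le_rpow_of_nonpos (by positivity) (by nlinarith [sq_nonneg a]) (by linarith)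

theorem integrable_one_add_sq_rpow {q : ℝ} (hq : 1 / 2 < q) :
    Integrable fun y : ℝ => (1 + y ^ 2) ^ (-q) := by
  have := integrable_rpow_neg_one_add_norm_sq (E := ℝ) (μ := volume) (r := 2 * q)
    (by simp; linarith)
  refine this.congr (Eventually.of_forall fun y => ?_)
  simp only [Real.norm_eq_abs, sq_abs]
  congr 1
  ring

theorem integrable_vertical_of_norm_le {Φ : ℂ → ℂ} {a K q : ℝ} (hq : 1 / 2 < q)
    (hd : ContinuousOn Φ {z | z.re = a})
    (hb : ∀ y : ℝ, ‖Φ (a + y * I)‖ ≤ K * (1 + y ^ 2) ^ (-q)) :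
    Integrable fun y : ℝ => Φ (a + y * I) := by
  refine ((integrable_one_add_sq_rpow hq).const_mul K).mono' ?_ (Eventually.of_forall hb)
  refine Continuous.aestronglyMeasurable ?_
  exact hd.comp_continuous (by fun_prop) (fun y => by simp)

theorem continuousOn_vertical {Φ : ℂ → ℂ} {s : Set ℂ} (hd : ContinuousOn Φ s) {a : ℝ}
    (h : ∀ z : ℂ, z.re = a → z ∈ s) : ContinuousOn Φ {z | z.re = a} :=
  hd.mono h

/-- Shifting a vertical line of integration across a strip of holomorphy. -/
theorem integral_vertical_eq_of_differentiableOn {Φ : ℂ → ℂ} {a b K q : ℝ} (hab : a ≤ b)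
    (hq : 1 / 2 < q) (hd : DifferentiableOn ℂ Φ {z | a ≤ z.re ∧ z.re ≤ b})
    (hb : ∀ z : ℂ, a ≤ z.re → z.re ≤ b → ‖Φ z‖ ≤ K * (1 + z.im ^ 2) ^ (-q)) :
    ∫ y : ℝ, Φ (a + y * I) = ∫ y : ℝ, Φ (b + y * I) := by
  have hia : Integrable fun y : ℝ => Φ (a + y * I) :=
    integrable_vertical_of_norm_le hq
      (continuousOn_vertical hd.continuousOn fun z hz => ⟨hz.ge, hz.le.trans hab⟩)
      (fun y => by simpa using hb (a + y * I) (by simp) (by simpa using hab))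
  have hib : Integrable fun y : ℝ => Φ (b + y * I) :=
    integrable_vertical_of_norm_le hq
      (continuousOn_vertical hd.continuousOn fun z hz => ⟨hab.trans hz.ge, hz.le⟩)
      (fun y => by simpa using hb (b + y * I) (by simpa using hab) (by simp))
  have hta := intervalIntegral_tendsto_integral hia tendsto_neg_atTop_atBot tendsto_id
  have htb := intervalIntegral_tendsto_integral hib tendsto_neg_atTop_atBot tendsto_id
  have hw : Tendsto (fun T : ℝ => (1 + T ^ 2) ^ (-q)) atTop (𝓝 0) := by
    refine (tendsto_rpow_neg_atTop (by linarith)).comp ?_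
    exact tendsto_atTop_add_const_left _ _ (tendsto_pow_atTop (by norm_num))
  have hhor : ∀ ε : ℝ, ε ^ 2 = 1 →
      Tendsto (fun T : ℝ => ∫ x : ℝ in a..b, Φ (x + (ε * T : ℝ) * I)) atTop (𝓝 0) := by
    intro ε hε
    have h0 : Tendsto (fun T : ℝ => K * (1 + T ^ 2) ^ (-q) * |b - a|) atTop (𝓝 0) := by
      simpa using (hw.const_mul K).mul_const |b - a|
    refine squeeze_zero_norm (fun T => ?_) h0
    refine intervalIntegral.norm_integral_le_of_norm_le_const fun x hx => ?_
    rw [Set.uIoc_of_le hab] at hx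
    have := hb (x + (ε * T : ℝ) * I) (by simpa using hx.1.le) (by simpa using hx.2)
    refine this.trans (le_of_eq ?_)
    have : ((x + (ε * T : ℝ) * I : ℂ)).im ^ 2 = T ^ 2 := by
      simp [mul_pow, hε]
    rw [this]
  have hrect : ∀ T : ℝ, (∫ y : ℝ in -T..T, Φ (b + y * I)) - ∫ y : ℝ in -T..T, Φ (a + y * I)
      = I * ((∫ x : ℝ in a..b, Φ (x + ((-1 : ℝ) * T : ℝ) * I)) -
        ∫ x : ℝ in a..b, Φ (x + ((1 : ℝ) * T : ℝ) * I)) := by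
    intro T
    have h := integral_boundary_rect_eq_zero_of_differentiableOn Φ (a + (-T : ℝ) * I) (b + T * I)
      (hd.mono fun z hz => by
        have := hz.1
        simp only [Set.mem_preimage] at this
        simp [Set.uIcc_of_le hab] at this
        exact this)
    simp only [add_re, ofReal_re, mul_re, I_re, mul_zero, ofReal_im, I_im, mul_one, sub_self,
      add_zero, add_im, mul_im, zero_add, smul_eq_mul] at h
    simp only [neg_mul, one_mul]
    have hI : I * I = -1 := I_mul_I
    linear_combination (-I) * h + ((∫ y : ℝ in -T..T, Φ (b + y * I)) -
      ∫ y : ℝ in -T..T, Φ (a + y * I)) * hI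
  have hlim := htb.sub hta
  have hz := ((hhor (-1) (by norm_num)).sub (hhor 1 (by norm_num))).const_mul I
  simp only [id] at hlim
  have : (∫ y : ℝ, Φ (b + y * I)) - ∫ y : ℝ, Φ (a + y * I) = 0 := by
    refine tendsto_nhds_unique hlim ?_
    simp_rw [hrect]
    simpa using hz
  exact (sub_eq_zero.1 this).symm

/-- A vertical integral vanishes if the integrand is holomorphic and decays to the right. -/
theorem integral_vertical_eq_zero {Φ : ℂ → ℂ} {a K : ℝ} {p : ℝ} (hp : 1 / 2 < p)
    (hd : DifferentiableOn ℂ Φ {z | a ≤ z.re})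
    (hb : ∀ z : ℂ, a ≤ z.re → ‖Φ z‖ ≤ K * normWeight (-p) z) :
    ∫ y : ℝ, Φ (a + y * I) = 0 := by
  have hK : 0 ≤ K := by
    have h1 := (norm_nonneg _).trans (hb a (by simp))
    exact nonneg_of_mul_nonneg_left h1 (normWeight_pos _ _)
  obtain ⟨q, hq1, hq2⟩ := exists_between hp
  set C := ∫ y : ℝ, (1 + y ^ 2) ^ (-q) with hC
  have hle : ∀ b : ℝ, max a 1 ≤ b →
      ‖∫ y : ℝ, Φ (a + y * I)‖ ≤ K * ((b ^ 2) ^ (-(p - q)) * C) := by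
    intro b hb1
    have hb0 : 0 < b := lt_of_lt_of_le (by norm_num) ((le_max_right _ _).trans hb1)
    rw [integral_vertical_eq_of_differentiableOn (b := b) (K := K) ((le_max_left _ _).trans hb1) hp
      (hd.mono fun z hz => hz.1) (fun z hz _ => ?_)]
    · rw [hC, ← integral_const_mul, ← integral_const_mul]
      refine norm_integral_le_of_norm_le
        (((integrable_one_add_sq_rpow hq1).const_mul _).const_mul _)
        (Eventually.of_forall fun y => ?_)
      refine (hb _ (by simpa using (le_max_left _ _).trans hb1)).trans ?_
      exact mul_le_mul_of_nonneg_left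
        (normWeight_vertical_le (by linarith) (by linarith) (by ring) hb0 y) hK
    · refine (hb z hz).trans (mul_le_mul_of_nonneg_left ?_ hK)
      have := normWeight_vertical_le' (q := p) (by linarith) z.re z.im
      rwa [re_add_im] at this
  have hlim : Tendsto (fun b : ℝ => K * ((b ^ 2) ^ (-(p - q)) * C)) atTop (𝓝 0) := by
    have h1 : Tendsto (fun b : ℝ => (b ^ 2) ^ (-(p - q))) atTop (𝓝 0) :=
      (tendsto_rpow_neg_atTop (by linarith)).comp (tendsto_pow_atTop (by norm_num))
    simpa using (h1.mul_const C).const_mul K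
  have := ge_of_tendsto hlim ((eventually_ge_atTop (max a 1)).mono hle)
  simpa using this

theorem exists_normWeight_neg_bound (p : ℂ) {δ : ℝ} (hδ : 0 < δ) :
    ∃ C : ℝ, 0 ≤ C ∧ ∀ z : ℂ, δ ≤ ‖z - p‖ → (‖z - p‖ ^ 2)⁻¹ ≤ C * normWeight (-1) z := by
  refine ⟨(1 + 2 * ‖p‖ ^ 2) / δ ^ 2 + 2, by positivity, fun z hz => ?_⟩
  have h1 : ‖z‖ ≤ ‖z - p‖ + ‖p‖ := by simpa using norm_add_le (z - p) p
  have h2 : 0 < ‖z - p‖ := hδ.trans_le hz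
  unfold normWeight
  rw [Real.rpow_neg_one, ← div_eq_mul_inv, inv_le_iff_one_le_mul₀ (by positivity),
    div_mul_eq_mul_div, one_le_div (by positivity)]
  have h3 : 1 + 2 * ‖p‖ ^ 2 ≤ (1 + 2 * ‖p‖ ^ 2) / δ ^ 2 * ‖z - p‖ ^ 2 := by
    rw [div_mul_eq_mul_div, le_div_iff₀ (by positivity)]
    gcongr
  have h4 : ‖z‖ ^ 2 ≤ (‖z - p‖ + ‖p‖) ^ 2 := by gcongr
  nlinarith [sq_nonneg (‖z - p‖ - ‖p‖)]

theorem exists_bound_of_bound_away {S : Set ℂ} (hS : IsClosed S) {Φ : ℂ → ℂ}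
    (hc : ContinuousOn Φ S) (p : ℂ) {δ K q : ℝ}
    (hb : ∀ z ∈ S, δ ≤ ‖z - p‖ → ‖Φ z‖ ≤ K * normWeight q z) :
    ∃ K', ∀ z ∈ S, ‖Φ z‖ ≤ K' * normWeight q z := by
  have hcomp : IsCompact (S ∩ Metric.closedBall p δ) :=
    (isCompact_closedBall p δ).inter_left hS
  have hcont : ContinuousOn (fun z => ‖Φ z‖ * normWeight (-q) z) (S ∩ Metric.closedBall p δ) := by
    refine (hc.mono Set.inter_subset_left).norm.mul (Continuous.continuousOn ?_)
    unfold normWeight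
    exact Continuous.rpow_const (by fun_prop) fun z => Or.inl (by positivity)
  obtain ⟨B, hB⟩ := hcomp.exists_bound_of_continuousOn hcont
  refine ⟨max K B, fun z hz => ?_⟩
  rcases le_total δ ‖z - p‖ with h | h
  · exact (hb z hz h).trans (mul_le_mul_of_nonneg_right (le_max_left _ _) (normWeight_pos _ _).le)
  · have h1 := hB z ⟨hz, by simpa [dist_eq_norm] using h⟩
    have h2 : normWeight q z * normWeight (-q) z = 1 := by
      rw [← normWeight_add]; simp [normWeight]
    have h3 := (le_abs_self _).trans h1
    calc ‖Φ z‖ = ‖Φ z‖ * normWeight (-q) z * normWeight q z := by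
            rw [mul_assoc, mul_comm (normWeight (-q) z), h2, mul_one]
      _ ≤ max K B * normWeight q z :=
          mul_le_mul_of_nonneg_right (h3.trans (le_max_right _ _)) (normWeight_pos _ _).le

/-- The entire function `s (s - 1) π^(-s/2) Γ(s/2) ζ(s)`. -/
noncomputable def entireXi (s : ℂ) : ℂ := s * (s - 1) * completedRiemannZeta₀ s + 1

theorem differentiable_entireXi : Differentiable ℂ entireXi := by
  unfold entireXi
  have := differentiable_completedZeta₀
  fun_prop

theorem entireXi_one_sub (s : ℂ) : entireXi (1 - s) = entireXi s := by
  simp only [entireXi, completedRiemannZeta₀_one_sub]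
  ring

theorem entireXi_one : entireXi 1 = 1 := by simp [entireXi]

theorem deriv_entireXi_one : deriv entireXi 1 = completedRiemannZeta₀ 1 := by
  have hd := differentiable_completedZeta₀ 1
  have h1 : HasDerivAt (fun s : ℂ => s * (s - 1)) 1 1 := by
    refine ((hasDerivAt_id' (1 : ℂ)).fun_mul ((hasDerivAt_id' (1 : ℂ)).sub_const 1)).congr_deriv ?_
    simp
  have h2 := (h1.mul hd.hasDerivAt).add_const 1
  have h3 : HasDerivAt entireXi _ 1 := h2
  rw [h3.deriv]
  simp

theorem entireXi_eq_mul {s : ℂ} (hs : 0 < s.re) :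
    entireXi s = s * Gammaℝ s * riemannZeta₁ s := by
  have hs0 : s ≠ 0 := by rintro rfl; simp at hs
  rcases eq_or_ne s 1 with rfl | hs1
  · simp [entireXi_one, Gammaℝ_one]
  · have h1 : riemannZeta₁ s = (s - 1) * riemannZeta s := by
      rw [riemannZeta_eq_inv_sub_mul hs1, ← mul_assoc, mul_inv_cancel₀ (sub_ne_zero.2 hs1), one_mul]
    have h2 : (1 - s) ≠ 0 := sub_ne_zero.2 hs1.symm
    rw [h1, riemannZeta_def_of_ne_zero hs0, completedRiemannZeta_eq, entireXi]
    have := Gammaℝ_ne_zero_of_re_pos hs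
    field_simp
    ring

theorem riemannZeta₁_eq {s : ℂ} (hs1 : s ≠ 1) : riemannZeta₁ s = (s - 1) * riemannZeta s := by
  rw [riemannZeta_eq_inv_sub_mul hs1, ← mul_assoc, mul_inv_cancel₀ (sub_ne_zero.2 hs1), one_mul]

theorem riemannZeta₁_ne_zero_of_RH (hRH : RiemannHypothesis) {s : ℂ} (hs : 1 / 2 < s.re) :
    riemannZeta₁ s ≠ 0 := by
  rcases eq_or_ne s 1 with rfl | hs1
  · simp
  · rw [riemannZeta₁_eq hs1]
    refine mul_ne_zero (sub_ne_zero.2 hs1) fun h => ?_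
    have := hRH s h (by
      rintro ⟨n, rfl⟩
      simp at hs
      linarith [Nat.cast_nonneg (α := ℝ) n]) hs1
    linarith

theorem entireXi_ne_zero_of_RH (hRH : RiemannHypothesis) {s : ℂ} (hs : 1 / 2 < s.re) :
    entireXi s ≠ 0 := by
  have hs0 : 0 < s.re := by linarith
  rw [entireXi_eq_mul hs0]
  refine mul_ne_zero (mul_ne_zero ?_ (Gammaℝ_ne_zero_of_re_pos hs0))
    (riemannZeta₁_ne_zero_of_RH hRH hs)
  rintro rfl
  simp at hs0

theorem Gammaℝ_conj (s : ℂ) :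
    Gammaℝ ((starRingEnd ℂ) s) = (starRingEnd ℂ) (Gammaℝ s) := by
  rw [Gammaℝ_def, Gammaℝ_def, map_mul, ← Gamma_conj]
  congr 1
  · have h := cpow_conj (Real.pi : ℂ) (-s / 2)
      (by rw [arg_ofReal_of_nonneg Real.pi_pos.le]; exact Real.pi_ne_zero.symm)
    rw [conj_ofReal] at h
    rw [← h]
    simp [conj_ofNat]
  · simp [conj_ofNat]

theorem entireXi_conj {s : ℂ} (hs : 0 < s.re) :
    entireXi ((starRingEnd ℂ) s) = (starRingEnd ℂ) (entireXi s) := by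
  rw [entireXi_eq_mul hs, entireXi_eq_mul (by simpa using hs), map_mul, map_mul, Gammaℝ_conj]
  congr 1
  rcases eq_or_ne s 1 with rfl | hs1
  · simp
  · rw [riemannZeta₁_eq hs1, riemannZeta₁_eq fun h => hs1 (by simpa using congrArg (starRingEnd ℂ) h),
      riemannZeta_conj]
    simp

theorem norm_entireXi_reflect {a : ℝ} (ha : 0 < a) (y : ℝ) :
    ‖entireXi (y * I + 1 / 2 - a)‖ = ‖entireXi (y * I + 1 / 2 + a)‖ := by
  rw [← entireXi_one_sub, ← norm_conj (entireXi (y * I + 1 / 2 + a)), ← entireXi_conj]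
  · congr 2
    simp [conj_ofNat]
    ring
  · simp
    linarith

theorem exists_norm_completedRiemannZeta₀_le (α β : ℝ) :
    ∃ C : ℝ, 0 ≤ C ∧ ∀ s : ℂ, α ≤ s.re → s.re ≤ β → ‖completedRiemannZeta₀ s‖ ≤ C := by
  set f := (HurwitzZeta.hurwitzEvenFEPair 0).f_modif with hf
  have hconv : ∀ s : ℂ, MellinConvergent f s :=
    fun s => ((HurwitzZeta.hurwitzEvenFEPair 0).isStrongFEPair_toStrongFEPair.hasMellin s).1
  have hnorm : ∀ (s : ℂ), ∀ x ∈ Set.Ioi (0 : ℝ),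
      ‖(x : ℂ) ^ (s - 1) • f x‖ = x ^ (s.re - 1) * ‖f x‖ := by
    intro s x hx
    rw [norm_smul, norm_cpow_eq_rpow_re_of_pos hx]
    simp
  have h_integ : ∀ r : ℝ, IntegrableOn (fun x : ℝ => x ^ (r - 1) * ‖f x‖) (Set.Ioi 0) := by
    intro r
    have := (hconv r).norm
    refine this.congr ?_
    filter_upwards [ae_restrict_mem measurableSet_Ioi] with x hx
    simpa using hnorm r x hx
  refine ⟨(∫ x in Set.Ioi (0 : ℝ),
    (x ^ (α / 2 - 1) * ‖f x‖ + x ^ (β / 2 - 1) * ‖f x‖)) / 2, ?_, ?_⟩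
  · refine div_nonneg (setIntegral_nonneg measurableSet_Ioi fun x hx => ?_) (by norm_num)
    have : (0 : ℝ) < x := hx
    positivity
  · intro s h1 h2
    have : completedRiemannZeta₀ s = mellin f (s / 2) / 2 := rfl
    rw [this, norm_div, mellin]
    simp only [Complex.norm_ofNat]
    refine div_le_div_of_nonneg_right ?_ (by norm_num)
    refine norm_integral_le_of_norm_le ((h_integ _).add (h_integ _)) ?_
    filter_upwards [ae_restrict_mem measurableSet_Ioi] with x hx
    have hx0 : (0 : ℝ) < x := hx
    rw [hnorm _ x hx]
    have hre : (s / 2).re = s.re / 2 := by simp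
    rw [hre, ← add_mul]
    refine mul_le_mul_of_nonneg_right ?_ (norm_nonneg _)
    rcases le_total 1 x with h | h
    · have := Real.rpow_le_rpow_of_exponent_le h (show s.re / 2 - 1 ≤ β / 2 - 1 by linarith)
      have h' : 0 ≤ x ^ (α / 2 - 1) := by positivity
      linarith
    · have := Real.rpow_le_rpow_of_exponent_ge hx0 h (show α / 2 - 1 ≤ s.re / 2 - 1 by linarith)
      have h' : 0 ≤ x ^ (β / 2 - 1) := by positivity
      linarith

theorem exists_norm_entireXi_le (α β : ℝ) :
    ∃ C : ℝ, 0 ≤ C ∧ ∀ s : ℂ, α ≤ s.re → s.re ≤ β →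
      ‖entireXi s‖ ≤ Real.exp (C + 2 * ‖s‖) := by
  obtain ⟨C, hC, h⟩ := exists_norm_completedRiemannZeta₀_le α β
  refine ⟨C + 1, by linarith, fun s h1 h2 => ?_⟩
  have h3 := h s h1 h2
  have h4 : ‖s - 1‖ ≤ ‖s‖ + 1 := by simpa using norm_sub_le s 1
  have h5 : ‖s‖ ≤ Real.exp ‖s‖ := by linarith [Real.add_one_le_exp ‖s‖]
  have h6 : ‖s - 1‖ ≤ Real.exp ‖s‖ := h4.trans (Real.add_one_le_exp ‖s‖)
  have h7 : 1 ≤ Real.exp (2 * ‖s‖) := Real.one_le_exp (by positivity)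
  calc ‖entireXi s‖ ≤ ‖s‖ * ‖s - 1‖ * ‖completedRiemannZeta₀ s‖ + 1 := by
        unfold entireXi
        refine (norm_add_le _ _).trans ?_
        simp
    _ ≤ Real.exp ‖s‖ * Real.exp ‖s‖ * C + 1 := by gcongr
    _ = Real.exp (2 * ‖s‖) * C + 1 := by rw [← Real.exp_add]; ring_nf
    _ ≤ (C + 1 + 1) * Real.exp (2 * ‖s‖) := by nlinarith
    _ ≤ Real.exp (C + 1) * Real.exp (2 * ‖s‖) := by
        gcongr
        exact Real.add_one_le_exp _
    _ = _ := by rw [← Real.exp_add]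

theorem norm_sin_le_exp (z : ℂ) : ‖sin z‖ ≤ Real.exp |z.im| := by
  have h1 : ‖cexp (-z * I)‖ ≤ Real.exp |z.im| := by
    rw [norm_exp]
    gcongr
    simpa using le_abs_self _
  have h2 : ‖cexp (z * I)‖ ≤ Real.exp |z.im| := by
    rw [norm_exp]
    gcongr
    simpa using neg_le_abs _
  rw [sin, norm_div, norm_mul]
  simp only [norm_I, mul_one, Complex.norm_ofNat]
  have := norm_sub_le (cexp (-z * I)) (cexp (z * I))
  linarith

theorem norm_Gamma_one_add_mul_I_ge {y : ℝ} (hy : 1 ≤ |y|) :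
    Real.exp (-(4 * |y|)) ≤ ‖Gamma (1 + y * I)‖ := by
  have hy0 : (y : ℂ) * I ≠ 0 := by
    simp
    rintro rfl
    norm_num at hy
  have h1 := Gamma_mul_Gamma_one_sub (1 + y * I)
  have h2 : Gamma (-(y * I) + 1) = -(y * I) * Gamma (-(y * I)) :=
    Gamma_add_one _ (neg_ne_zero.2 hy0)
  have h3 : ‖Gamma (-(y * I) + 1)‖ = ‖Gamma (1 + y * I)‖ := by
    rw [← norm_conj (Gamma (1 + y * I)), ← Gamma_conj]
    congr 2
    simp
    ring
  have hpi := Real.pi_gt_three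
  have h4 : ‖sin (Real.pi * (1 + y * I))‖ ≤ Real.exp (4 * |y|) := by
    refine (norm_sin_le_exp _).trans ?_
    gcongr
    simp [abs_mul, abs_of_pos Real.pi_pos]
    nlinarith [Real.pi_le_four, abs_nonneg y]
  have hG : Gamma (1 + y * I) ≠ 0 := Gamma_ne_zero_of_re_pos (by simp)
  have hs : sin (Real.pi * (1 + y * I)) ≠ 0 := by
    intro h
    rw [h, div_zero] at h1
    have h5 : Gamma (1 - (1 + y * I)) = 0 := (mul_eq_zero.1 h1).resolve_left hG
    rw [show (1 : ℂ) - (1 + y * I) = -(y * I) by ring] at h5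
    rw [h5, mul_zero] at h2
    rw [h2, norm_zero] at h3
    exact hG (norm_eq_zero.1 h3.symm)
  have h5 : ‖Gamma (1 + y * I)‖ ^ 2 = |y| * (Real.pi / ‖sin (Real.pi * (1 + y * I))‖) := by
    have h6 : Gamma (1 + y * I) * Gamma (-(y * I) + 1)
        = -(y * I) * (Real.pi / sin (Real.pi * (1 + y * I))) := by
      rw [h2, ← h1, show (1 : ℂ) - (1 + y * I) = -(y * I) by ring]
      ring
    have h7 := congrArg norm h6
    rw [norm_mul, h3] at h7
    rw [sq, h7]
    simp [abs_of_pos Real.pi_pos]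
  have h6 : Real.exp (-(4 * |y|)) ≤ ‖Gamma (1 + y * I)‖ ^ 2 := by
    rw [h5, Real.exp_neg]
    have h8 : 0 < ‖sin (Real.pi * (1 + y * I))‖ := norm_pos_iff.2 hs
    have h9 : (Real.exp (4 * |y|))⁻¹ ≤ ‖sin (Real.pi * (1 + y * I))‖⁻¹ := inv_anti₀ h8 h4
    have h10 : 0 < ‖sin (Real.pi * (1 + y * I))‖⁻¹ := inv_pos.2 h8
    rw [div_eq_mul_inv, ← mul_assoc]
    have : 1 ≤ |y| * Real.pi := by nlinarith
    nlinarith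
  by_contra! hlt
  have h7 : Real.exp (-(4 * |y|)) ≤ 1 := Real.exp_le_one_iff.2 (by simp)
  nlinarith [norm_nonneg (Gamma (1 + y * I))]

theorem exists_norm_inv_riemannZeta_le {σ : ℝ} (hσ : 1 < σ) :
    ∃ C : ℝ, 0 < C ∧ ∀ s : ℂ, σ ≤ s.re → ‖(riemannZeta s)⁻¹‖ ≤ C ∧ ‖riemannZeta s‖ ≤ C ∧
      ‖LSeries (fun n => (ArithmeticFunction.vonMangoldt n : ℂ)) s‖ ≤ C := by
  have key : ∀ f : ℕ → ℂ, LSeriesSummable f σ → ∃ C : ℝ, ∀ s : ℂ, σ ≤ s.re → ‖LSeries f s‖ ≤ C := by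
    intro f hf
    refine ⟨∑' n, ‖LSeries.term f σ n‖, fun s hs => ?_⟩
    refine tsum_of_norm_bounded hf.norm.hasSum fun n => ?_
    exact LSeries.norm_term_le_of_re_le_re f (by simpa using hs) n
  obtain ⟨C1, h1⟩ := key (fun n => (ArithmeticFunction.moebius n : ℂ))
    (ArithmeticFunction.LSeriesSummable_moebius_iff.2 (by simpa using hσ))
  obtain ⟨C2, h2⟩ := key 1 (LSeriesSummable_one_iff.2 (by simpa using hσ))
  obtain ⟨C3, h3⟩ := key (fun n => (ArithmeticFunction.vonMangoldt n : ℂ))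
    (ArithmeticFunction.LSeriesSummable_vonMangoldt (by simpa using hσ))
  refine ⟨max 1 (max C1 (max C2 C3)), by positivity, fun s hs => ⟨?_, ?_, ?_⟩⟩
  · have hs1 : 1 < s.re := hσ.trans_le hs
    have h4 := ArithmeticFunction.LSeries_zeta_mul_Lseries_moebius hs1
    rw [ArithmeticFunction.LSeries_zeta_eq_riemannZeta hs1] at h4
    rw [← eq_inv_of_mul_eq_one_right h4]
    exact (h1 s hs).trans (by simp)
  · have hs1 : 1 < s.re := hσ.trans_le hs
    rw [← LSeries_one_eq_riemannZeta hs1]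
    exact (h2 s hs).trans (by simp)
  · exact (h3 s hs).trans (by simp)

/-- Lower bound for a zero-free holomorphic function on a disc. -/
theorem norm_ge_of_norm_le_of_ne_zero {f : ℂ → ℂ} {c : ℂ} {r R A : ℝ} (hr : 0 ≤ r) (hrR : r < R)
    (hA : 0 < A)
    (hf : DifferentiableOn ℂ f (Metric.ball c R)) (h0 : ∀ z ∈ Metric.ball c R, f z ≠ 0)
    (hb : ∀ z ∈ Metric.ball c R, ‖f z‖ ≤ ‖f c‖ * Real.exp A) {z : ℂ} (hz : ‖z - c‖ ≤ r) :
    ‖f c‖ * Real.exp (-(2 * A * r / (R - r))) ≤ ‖f z‖ := by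
  have hR : 0 < R := hr.trans_lt hrR
  have hc : c ∈ Metric.ball c R := Metric.mem_ball_self hR
  have hzR : z ∈ Metric.ball c R := by
    rw [Metric.mem_ball, dist_eq_norm]; linarith
  have hq : DifferentiableOn ℂ (fun w => deriv f w / f w) (Metric.ball c R) :=
    (hf.deriv Metric.isOpen_ball).div hf h0
  obtain ⟨g, hgc, hg⟩ := hq.isExactOn_ball.with_val_at c 0
  have hfg : ∀ w ∈ Metric.ball c R, f w = f c * cexp (g w) := by
    have hd : ∀ w ∈ Metric.ball c R, HasDerivAt (fun w => f w * cexp (-g w)) 0 w := by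
      intro w hw
      have h1 := (hf.differentiableAt (Metric.isOpen_ball.mem_nhds hw)).hasDerivAt
      refine (h1.fun_mul (hg w hw).fun_neg.cexp).congr_deriv ?_
      have := h0 w hw
      field_simp
      ring
    intro w hw
    have h2 := (convex_ball c R).is_const_of_fderivWithin_eq_zero (𝕜 := ℂ)
      (f := fun w => f w * cexp (-g w))
      (fun w hw => (hd w hw).differentiableAt.differentiableWithinAt)
      (fun w hw => by
        rw [fderivWithin_of_isOpen Metric.isOpen_ball hw]
        ext
        simpa using (hd w hw).deriv) hw hc
    simp only [hgc, neg_zero, Complex.exp_zero, mul_one] at h2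
    rw [← h2, mul_assoc, ← Complex.exp_add]
    simp
  have hre : ∀ w ∈ Metric.ball c R, (g w).re ≤ A := by
    intro w hw
    have h1 := hb w hw
    rw [hfg w hw, norm_mul, norm_exp] at h1
    exact Real.exp_le_exp.1 (le_of_mul_le_mul_left h1 (norm_pos_iff.2 (h0 c hc)))
  have hshift : ∀ w ∈ Metric.ball (0 : ℂ) R, c + w ∈ Metric.ball c R := by
    intro w hw
    simpa using hw
  have hBC := borelCaratheodory_zero (f := fun w => g (c + w)) (M := A) (R := R) (z := z - c) hA
    (fun w hw => ((hg _ (hshift w hw)).differentiableAt.comp w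
      (by fun_prop)).differentiableWithinAt)
    (fun w hw => hre _ (hshift w hw)) hR (by rw [mem_ball_zero_iff]; linarith) (by simpa using hgc)
  simp only [add_sub_cancel] at hBC
  rw [hfg z hzR, norm_mul, norm_exp]
  refine mul_le_mul_of_nonneg_left (Real.exp_le_exp.2 ?_) (norm_nonneg _)
  have h3 : 2 * A * ‖z - c‖ / (R - ‖z - c‖) ≤ 2 * A * r / (R - r) := by
    gcongr
  linarith [neg_le_of_abs_le (abs_re_le_norm (g z))]

theorem exists_norm_entireXi_two_add_ge : ∃ C : ℝ, 0 ≤ C ∧ ∀ t : ℝ, 2 ≤ |t| →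
    Real.exp (-(C + 2 * |t|)) ≤ ‖entireXi (2 + t * I)‖ := by
  obtain ⟨C, hC, h⟩ := exists_norm_inv_riemannZeta_le (σ := 2) (by norm_num)
  refine ⟨max 0 (Real.log (Real.pi * C)), le_max_left _ _, fun t ht => ?_⟩
  have hre : (2 + t * I : ℂ).re = 2 := by simp
  have h1 : (2 + t * I : ℂ) ≠ 1 := by
    intro h; have := congrArg re h; simp at this
  have hz : riemannZeta (2 + t * I) ≠ 0 := riemannZeta_ne_zero_of_one_le_re (by simp)
  have h2 := (h (2 + t * I) (by simp)).1
  rw [norm_inv, inv_le_comm₀ (norm_pos_iff.2 hz) hC] at h2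
  have h3 : ‖Gammaℝ (2 + t * I)‖ = Real.pi⁻¹ * ‖Gamma (1 + (t / 2 : ℝ) * I)‖ := by
    rw [Gammaℝ_def, norm_mul, norm_cpow_eq_rpow_re_of_pos Real.pi_pos]
    congr 1
    · simp [Real.rpow_neg_one]
    · congr 2
      push_cast
      ring
  have h4 := norm_Gamma_one_add_mul_I_ge (y := t / 2) (by rw [abs_div]; norm_num; linarith)
  have h5 : 1 ≤ ‖(2 + t * I : ℂ)‖ := by
    have := abs_re_le_norm (2 + t * I : ℂ)
    rw [hre] at this
    norm_num at this
    linarith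
  have h6 : 1 ≤ ‖(2 + t * I - 1 : ℂ)‖ := by
    have := abs_re_le_norm (2 + t * I - 1 : ℂ)
    rw [sub_re, hre] at this
    norm_num at this
    linarith
  rw [entireXi_eq_mul (by simp), riemannZeta₁_eq h1, norm_mul, norm_mul, norm_mul, h3]
  have hpi := Real.pi_pos
  have h7 : Real.exp (-(max 0 (Real.log (Real.pi * C)) + 2 * |t|))
      ≤ (Real.pi * C)⁻¹ * Real.exp (-(2 * |t|)) := by
    rw [neg_add, Real.exp_add]
    refine mul_le_mul_of_nonneg_right ?_ (Real.exp_pos _).le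
    rw [Real.exp_neg]
    refine inv_anti₀ (by positivity) ?_
    calc Real.pi * C = Real.exp (Real.log (Real.pi * C)) := (Real.exp_log (by positivity)).symm
      _ ≤ _ := Real.exp_le_exp.2 (le_max_right _ _)
  have h8 : Real.exp (-(2 * |t|)) = Real.exp (-(4 * |t / 2|)) := by
    rw [abs_div]; congr 1; norm_num; ring
  calc _ ≤ (Real.pi * C)⁻¹ * Real.exp (-(2 * |t|)) := h7
    _ = 1 * (Real.pi⁻¹ * Real.exp (-(4 * |t / 2|))) * (1 * C⁻¹) := by
        rw [h8, mul_inv]; ring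
    _ ≤ _ := by gcongr

theorem exists_norm_entireXi_ge_of_RH (hRH : RiemannHypothesis) {a : ℝ} (ha : 0 < a)
    (ha' : a < 1) :
    ∃ C : ℝ, 0 ≤ C ∧ ∀ s : ℂ, 1 / 2 + a ≤ s.re → s.re ≤ 2 → 2 ≤ |s.im| →
      Real.exp (-(C * (1 + ‖s‖))) ≤ ‖entireXi s‖ := by
  obtain ⟨C1, hC1, h1⟩ := exists_norm_entireXi_two_add_ge
  obtain ⟨C2, hC2, h2⟩ := exists_norm_entireXi_le (1 / 2) (7 / 2)
  have hfac : 0 ≤ 2 * (3 / 2 - a) / a := by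
    have : 0 ≤ 3 / 2 - a := by linarith
    positivity
  refine ⟨(C1 + C2 + 8) * (1 + 2 * (3 / 2 - a) / a), by positivity, fun s hs1 hs2 hs3 => ?_⟩
  set c : ℂ := 2 + s.im * I with hc
  have h3 := h1 s.im hs3
  have him : |s.im| ≤ ‖s‖ := abs_im_le_norm s
  have hcn : ‖c‖ ≤ 2 + |s.im| := by
    refine (norm_add_le _ _).trans ?_
    simp
  have hsc : ‖s - c‖ ≤ 3 / 2 - a := by
    have : s - c = ((s.re - 2 : ℝ) : ℂ) := by
      apply Complex.ext <;> simp [hc]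
    rw [this, norm_real, Real.norm_eq_abs, abs_le]
    constructor <;> linarith
  set A := (C1 + C2 + 8) * (1 + ‖s‖) with hA
  have hA1 : C1 + 2 * |s.im| ≤ A := by
    rw [hA]; nlinarith [norm_nonneg s]
  have h4 := norm_ge_of_norm_le_of_ne_zero (f := entireXi) (c := c) (r := 3 / 2 - a) (R := 3 / 2)
    (A := A) (by linarith) (by linarith)
    (by positivity) differentiable_entireXi.differentiableOn
    (fun z hz => entireXi_ne_zero_of_RH hRH (by
      rw [Metric.mem_ball, dist_eq_norm] at hz
      have := neg_le_of_abs_le (abs_re_le_norm (z - c))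
      simp [hc] at this hz
      linarith))
    (fun z hz => by
      rw [Metric.mem_ball, dist_eq_norm] at hz
      have h5 := abs_le.1 (abs_re_le_norm (z - c))
      have h6 : ‖z‖ ≤ ‖z - c‖ + ‖c‖ := by simpa using norm_add_le (z - c) c
      simp only [sub_re, hc, add_re, re_ofNat, mul_re, ofReal_re, I_re, mul_zero, ofReal_im, I_im,
        zero_mul, sub_zero, add_zero] at h5
      rw [← hc] at h5
      refine (h2 z (by linarith) (by linarith)).trans ?_
      refine le_trans ?_ (mul_le_mul_of_nonneg_right h3 (Real.exp_pos _).le)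
      rw [← Real.exp_add]
      refine Real.exp_le_exp.2 ?_
      rw [hA]
      nlinarith [norm_nonneg s]) hsc
  rw [show 3 / 2 - (3 / 2 - a) = a by ring] at h4
  refine le_trans ?_ h4
  refine le_trans ?_ (mul_le_mul_of_nonneg_right h3 (Real.exp_pos _).le)
  rw [← Real.exp_add]
  refine Real.exp_le_exp.2 ?_
  have : (C1 + C2 + 8) * (1 + 2 * (3 / 2 - a) / a) * (1 + ‖s‖)
    = A + 2 * A * (3 / 2 - a) / a := by
      rw [hA]; ring
  rw [this]
  linarith

theorem exists_norm_betaIntegral_le {r a : ℝ} (hr : 0 < r) (ha : 0 < a) :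
    ∃ C : ℝ, 0 ≤ C ∧ ∀ u : ℂ, r ≤ u.re → ‖betaIntegral u a‖ ≤ C := by
  have h_integ := (betaIntegral_convergent (u := r) (v := a) (by simpa) (by simpa)).norm
  refine ⟨_, (norm_nonneg _).trans (intervalIntegral.norm_integral_le_of_norm_le zero_le_one
    (Eventually.of_forall fun x _ => le_rfl) h_integ), fun u hu => ?_⟩
  refine intervalIntegral.norm_integral_le_of_norm_le zero_le_one
    (Eventually.of_forall fun x hx => ?_) h_integ
  rw [norm_mul, norm_mul]
  refine mul_le_mul_of_nonneg_right ?_ (norm_nonneg _)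
  rw [norm_cpow_eq_rpow_re_of_pos hx.1, norm_cpow_eq_rpow_re_of_pos hx.1]
  exact Real.rpow_le_rpow_of_exponent_ge hx.1 hx.2 (by simpa)

theorem exists_norm_Gammaℝ_sub_le {a : ℝ} (ha : 0 < a) :
    ∃ C : ℝ, 0 ≤ C ∧ ∀ s : ℂ, 1 + 2 * a ≤ s.re → ‖Gammaℝ (s - 2 * a)‖ ≤ C * ‖Gammaℝ s‖ := by
  obtain ⟨C, hC, h⟩ := exists_norm_betaIntegral_le (r := 1 / 2) (a := a) (by norm_num) ha
  have hG : 0 < ‖Gamma a‖ := norm_pos_iff.2 (Gamma_ne_zero_of_re_pos (by simpa))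
  have hpi := Real.pi_pos
  refine ⟨Real.pi ^ a * (C / ‖Gamma a‖), by positivity, fun s hs => ?_⟩
  have h1 := Gamma_mul_Gamma_eq_betaIntegral (s := s / 2 - a) (t := a)
    (by simp; linarith) (by simpa)
  rw [sub_add_cancel] at h1
  have h2 : ‖Gamma (s / 2 - a)‖ ≤ C / ‖Gamma a‖ * ‖Gamma (s / 2)‖ := by
    have h3 := congrArg norm h1
    rw [norm_mul, norm_mul] at h3
    rw [div_mul_eq_mul_div, le_div_iff₀ hG, h3, mul_comm]
    gcongr
    exact h _ (by simp; linarith)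
  rw [Gammaℝ_def, Gammaℝ_def, norm_mul, norm_mul, norm_cpow_eq_rpow_re_of_pos hpi,
    norm_cpow_eq_rpow_re_of_pos hpi, show (s - 2 * a) / 2 = s / 2 - a by ring]
  have h4 : (-(s - 2 * a) / 2).re = a + (-s / 2).re := by
    simp; ring
  rw [h4, Real.rpow_add hpi]
  calc _ ≤ Real.pi ^ a * Real.pi ^ (-s / 2).re * (C / ‖Gamma a‖ * ‖Gamma (s / 2)‖) := by gcongr
    _ = _ := by ring

theorem exists_norm_entireXi_sub_le {a : ℝ} (ha : 0 < a) (ha' : a ≤ 1 / 4) :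
    ∃ C : ℝ, 0 ≤ C ∧ ∀ s : ℂ, 2 ≤ s.re → ‖entireXi (s - 2 * a)‖ ≤ C * ‖entireXi s‖ := by
  obtain ⟨C1, hC1, h1⟩ := exists_norm_Gammaℝ_sub_le ha
  obtain ⟨C2, hC2, h2⟩ := exists_norm_inv_riemannZeta_le (σ := 3 / 2) (by norm_num)
  refine ⟨2 * C1 * (2 * (C2 * C2)), by positivity, fun s hs => ?_⟩
  have hre : (s - 2 * a).re = s.re - 2 * a := by simp
  have hn : ‖(2 * a : ℂ)‖ ≤ 1 := by
    rw [norm_mul, norm_real, Real.norm_eq_abs, abs_of_pos ha]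
    norm_num; linarith
  have hs1 : s ≠ 1 := by rintro rfl; norm_num at hs
  have hs2 : s - 2 * a ≠ 1 := by
    intro h; have := congrArg re h; rw [hre, one_re] at this; linarith
  rw [entireXi_eq_mul (s := s - 2 * a) (by rw [hre]; linarith), entireXi_eq_mul (s := s) (by linarith),
    riemannZeta₁_eq hs1, riemannZeta₁_eq hs2]
  simp only [norm_mul]
  have h3 := h1 s (by linarith)
  have h4 := (h2 (s - 2 * a) (by rw [hre]; linarith)).2.1
  have hz : 0 < ‖riemannZeta s‖ :=
    norm_pos_iff.2 (riemannZeta_ne_zero_of_one_le_re (by linarith))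
  have h5 := (h2 s (by linarith)).1
  rw [norm_inv, inv_le_iff_one_le_mul₀ hz] at h5
  have h6 : ‖s - 2 * a‖ ≤ 2 * ‖s‖ := by
    have h7 := norm_sub_le s (2 * a)
    have h8 := (le_abs_self _).trans (abs_re_le_norm s)
    linarith
  have h7 : ‖s - 2 * a - 1‖ ≤ 2 * ‖s - 1‖ := by
    have h7 := norm_sub_le (s - 1) (2 * a)
    have h8 := (le_abs_self _).trans (abs_re_le_norm (s - 1))
    rw [sub_re, one_re] at h8
    rw [show s - 2 * a - 1 = s - 1 - 2 * a by ring]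
    linarith
  have h9 : ‖riemannZeta (s - 2 * a)‖ ≤ C2 * (C2 * ‖riemannZeta s‖) := by nlinarith
  calc _ ≤ 2 * ‖s‖ * (C1 * ‖Gammaℝ s‖) * (2 * ‖s - 1‖ * (C2 * (C2 * ‖riemannZeta s‖))) := by
        gcongr
    _ = _ := by ring

theorem norm_entireXi_sub_le_norm_entireXi_add (hRH : RiemannHypothesis) {a : ℝ} (ha : 0 < a)
    (ha' : a ≤ 1 / 4) {z : ℂ} (hz : 0 ≤ z.re) :
    ‖entireXi (z + 1 / 2 - a)‖ ≤ ‖entireXi (z + 1 / 2 + a)‖ := by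
  have hre : ∀ z : ℂ, (z + 1 / 2 + a).re = z.re + 1 / 2 + a := by
    intro z; simp
  have hre' : ∀ z : ℂ, (z + 1 / 2 - a).re = z.re + 1 / 2 - a := by
    intro z; simp
  have hne : ∀ z : ℂ, 0 ≤ z.re → entireXi (z + 1 / 2 + a) ≠ 0 := fun z hz =>
    entireXi_ne_zero_of_RH hRH (by rw [hre]; linarith)
  have hsub : ∀ z : ℂ, z + 1 / 2 - a = z + 1 / 2 + a - 2 * a := fun z => by ring
  have hcont : ContinuousOn (fun z : ℂ => entireXi (z + 1 / 2 - a) / entireXi (z + 1 / 2 + a))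
      {z | 0 ≤ z.re} := by
    have := differentiable_entireXi.continuous
    refine ContinuousOn.div (by fun_prop) (by fun_prop) hne
  obtain ⟨C1, hC1, h1⟩ := exists_norm_entireXi_sub_le ha ha'
  obtain ⟨C2, hC2, h2⟩ := exists_norm_entireXi_le 0 2
  obtain ⟨C3, hC3, h3⟩ := exists_norm_entireXi_ge_of_RH hRH ha (by linarith)
  obtain ⟨C4, h4⟩ : ∃ C4 : ℝ, ∀ z : ℂ, 0 ≤ z.re → z.re ≤ 2 → |z.im| ≤ 2 →
      ‖entireXi (z + 1 / 2 - a) / entireXi (z + 1 / 2 + a)‖ ≤ C4 := by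
    have hK : IsCompact (Set.Icc (0 : ℝ) 2 ×ℂ Set.Icc (-2 : ℝ) 2) :=
      isCompact_Icc.reProdIm isCompact_Icc
    obtain ⟨C, hC⟩ := hK.exists_bound_of_continuousOn
      (hcont.mono fun z hz => (mem_reProdIm.1 hz).1.1)
    exact ⟨C, fun z h1 h2 h3 => hC z (mem_reProdIm.2 ⟨⟨h1, h2⟩, abs_le.1 h3⟩)⟩
  have hlarge : ∀ z : ℂ, 2 ≤ (z + 1 / 2 + a).re →
      ‖entireXi (z + 1 / 2 - a) / entireXi (z + 1 / 2 + a)‖ ≤ C1 := by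
    intro z hz
    rw [hre] at hz
    rw [norm_div, div_le_iff₀ (norm_pos_iff.2 (hne z (by linarith))), hsub]
    exact h1 _ (by rw [hre]; exact hz)
  have hz0 : 0 < ‖entireXi (z + 1 / 2 + a)‖ := norm_pos_iff.2 (hne z hz)
  have key : ‖entireXi (z + 1 / 2 - a) / entireXi (z + 1 / 2 + a)‖ ≤ 1 := by
    refine PhragmenLindelof.right_half_plane_of_bounded_on_real
      (f := fun z : ℂ => entireXi (z + 1 / 2 - a) / entireXi (z + 1 / 2 + a)) ⟨?_, ?_⟩
      ⟨1, by norm_num, C2 + C3 + 2, ?_⟩ ?_ ?_ hz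
    · have := differentiable_entireXi
      refine DifferentiableOn.fun_div (by fun_prop) (by fun_prop) fun z hz => hne z (le_of_lt hz)
    · rwa [closure_setOfPred_lt_re]
    · refine Asymptotics.IsBigO.of_bound (|C4| + C1 + Real.exp (C2 + 2 * 1 + 2 * C3)) ?_
      rw [eventually_inf_principal]
      refine Eventually.of_forall fun z hz => ?_
      have hz : 0 < z.re := hz
      rw [Real.norm_of_nonneg (Real.exp_pos _).le, Real.rpow_one]
      have he : 1 ≤ Real.exp ((C2 + C3 + 2) * ‖z‖) := Real.one_le_exp (by positivity)
      have he' : 0 < Real.exp (C2 + 2 * 1 + 2 * C3) := Real.exp_pos _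
      by_cases hbig : 2 ≤ (z + 1 / 2 + a).re
      · refine (hlarge z hbig).trans (le_trans ?_ (le_mul_of_one_le_right (by positivity) he))
        linarith [abs_nonneg C4]
      rw [hre] at hbig
      by_cases him : |z.im| ≤ 2
      · refine ((h4 z hz.le (by linarith) him).trans (le_abs_self _)).trans
          (le_trans ?_ (le_mul_of_one_le_right (by positivity) he))
        linarith
      · push Not at him hbig
        have hn : ‖z + 1 / 2 + a‖ ≤ ‖z‖ + 1 := by
          have h5 : ‖(1 / 2 + a : ℂ)‖ ≤ 1 := by
            have : (1 / 2 + a : ℂ) = ((1 / 2 + a : ℝ) : ℂ) := by push_cast; ring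
            rw [this, norm_real, Real.norm_of_nonneg (by linarith)]
            linarith
          rw [add_assoc]
          exact (norm_add_le _ _).trans (by linarith)
        have hn' : ‖z + 1 / 2 - a‖ ≤ ‖z‖ + 1 := by
          have h5 : ‖(1 / 2 - a : ℂ)‖ ≤ 1 := by
            have : (1 / 2 - a : ℂ) = ((1 / 2 - a : ℝ) : ℂ) := by push_cast; ring
            rw [this, norm_real, Real.norm_of_nonneg (by linarith)]
            linarith
          rw [add_sub_assoc]
          exact (norm_add_le _ _).trans (by linarith)
        have h5 := h2 (z + 1 / 2 - a) (by rw [hre']; linarith) (by rw [hre']; linarith)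
        have h6 := h3 (z + 1 / 2 + a) (by rw [hre]; linarith) (by rw [hre]; linarith)
          (by simpa using him.le)
        rw [norm_div, div_eq_mul_inv]
        have h7 : ‖entireXi (z + 1 / 2 + a)‖⁻¹ ≤ Real.exp (C3 * (‖z‖ + 2)) := by
          rw [← inv_inv (Real.exp _), ← Real.exp_neg]
          refine inv_anti₀ (Real.exp_pos _) (le_trans ?_ h6)
          exact Real.exp_le_exp.2 (neg_le_neg (mul_le_mul_of_nonneg_left (by linarith) hC3))
        calc _ ≤ Real.exp (C2 + 2 * (‖z‖ + 1)) * Real.exp (C3 * (‖z‖ + 2)) := by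
              gcongr
              exact h5.trans (by gcongr)
          _ = Real.exp (C2 + 2 * 1 + 2 * C3) * Real.exp ((C3 + 2) * ‖z‖) := by
              rw [← Real.exp_add, ← Real.exp_add]; ring_nf
          _ ≤ _ := by
              gcongr
              · linarith [abs_nonneg C4]
              · linarith
    · refine isBoundedUnder_of_eventually_le (a := C1) ?_
      filter_upwards [eventually_ge_atTop 2] with x hx
      exact hlarge x (by rw [hre]; simp; linarith)
    · intro y
      rw [norm_div, norm_entireXi_reflect ha]
      exact div_self_le_one _
  rw [norm_div] at key
  exact (div_le_one hz0).1 key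

theorem re_logDeriv_entireXi_nonneg (hRH : RiemannHypothesis) {s : ℂ} (hs : 1 / 2 < s.re) :
    0 ≤ (logDeriv entireXi s).re := by
  have hd : ∀ w, HasDerivAt entireXi (deriv entireXi w) w := fun w =>
    (differentiable_entireXi w).hasDerivAt
  have hp : HasDerivAt (fun a : ℝ => entireXi (s + a)) (deriv entireXi s) 0 := by
    have h1 : HasDerivAt (fun w : ℂ => entireXi (s + w)) (deriv entireXi s) ((0 : ℝ) : ℂ) := by
      have := (hd (s + ((0 : ℝ) : ℂ))).comp_const_add s ((0 : ℝ) : ℂ)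
      simpa using this
    exact h1.comp_ofReal
  have hm : HasDerivAt (fun a : ℝ => entireXi (s - a)) (-deriv entireXi s) 0 := by
    have h1 : HasDerivAt (fun w : ℂ => entireXi (s - w)) (-deriv entireXi s) ((0 : ℝ) : ℂ) := by
      have := (hd (s - ((0 : ℝ) : ℂ))).comp_const_sub s ((0 : ℝ) : ℂ)
      simpa using this
    exact h1.comp_ofReal
  have hφ := hp.norm_sq.fun_sub hm.norm_sq
  simp only [ofReal_zero, add_zero, sub_zero, inner_neg_right] at hφ
  have hpos : 0 ≤ 2 * inner ℝ (entireXi s) (deriv entireXi s)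
      - 2 * -inner ℝ (entireXi s) (deriv entireXi s) := by
    refine ge_of_tendsto (hφ.tendsto_slope.mono_left
      (nhdsWithin_mono _ (fun x hx => ne_of_gt hx : Set.Ioi (0 : ℝ) ⊆ {0}ᶜ))) ?_
    have h1 : ∀ᶠ a : ℝ in 𝓝[>] 0, a < min (1 / 4) (s.re - 1 / 2) :=
      nhdsWithin_le_nhds (eventually_lt_nhds (by simp; linarith))
    filter_upwards [h1, self_mem_nhdsWithin] with a ha ha0
    have ha0 : 0 < a := ha0
    rw [lt_min_iff] at ha
    have h2 := norm_entireXi_sub_le_norm_entireXi_add hRH ha0 ha.1.le (z := s - 1 / 2)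
      (by simp; linarith)
    rw [sub_add_cancel] at h2
    rw [slope_def_field]
    simp only [ofReal_zero, add_zero, sub_zero, sub_self]
    refine div_nonneg (sub_nonneg.2 ?_) ha0.le
    gcongr
  have hne := entireXi_ne_zero_of_RH hRH hs
  have h3 : (deriv entireXi s / entireXi s).re
      = inner ℝ (entireXi s) (deriv entireXi s) / normSq (entireXi s) := by
    rw [div_re, Complex.inner, mul_re]
    simp
    ring
  rw [logDeriv_apply, h3]
  exact div_nonneg (by linarith) (normSq_nonneg _)

theorem digamma_ofReal {x : ℝ} (hx : 0 < x) :
    digamma x = ((deriv Real.Gamma x / Real.Gamma x : ℝ) : ℂ) := by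
  have hne : ∀ m : ℕ, (x : ℂ) ≠ -m := by
    intro m h
    have := congrArg re h
    simp at this
    linarith [Nat.cast_nonneg (α := ℝ) m]
  have hne' : ∀ m : ℕ, x ≠ -m := by
    intro m h
    linarith [Nat.cast_nonneg (α := ℝ) m]
  have h1 := (differentiableAt_Gamma _ hne).hasDerivAt.comp_ofReal
  have h2 := (Real.differentiableAt_Gamma hne').hasDerivAt.ofReal_comp
  have h3 : (fun y : ℝ => Gamma (y : ℂ)) = fun y : ℝ => ((Real.Gamma y : ℝ) : ℂ) := by
    ext y; exact Gamma_ofReal y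
  rw [h3] at h1
  rw [digamma_def, logDeriv_apply, h1.unique h2, Gamma_ofReal, ofReal_div]

theorem log_le_digamma_le_log {x : ℝ} (hx : 0 < x) :
    Real.log x ≤ (digamma ((x + 1 : ℝ) : ℂ)).re ∧
      (digamma ((x + 1 : ℝ) : ℂ)).re ≤ Real.log (x + 1) := by
  have hx1 : 0 < x + 1 := by linarith
  rw [digamma_ofReal hx1, ofReal_re]
  have hd : HasDerivAt (Real.log ∘ Real.Gamma)
      (deriv Real.Gamma (x + 1) / Real.Gamma (x + 1)) (x + 1) :=
    (Real.differentiableAt_Gamma (fun m h => by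
      linarith [Nat.cast_nonneg (α := ℝ) m])).hasDerivAt.log (Real.Gamma_pos_of_pos hx1).ne'
  have hstep : ∀ y : ℝ, 0 < y →
      (Real.log ∘ Real.Gamma) (y + 1) - (Real.log ∘ Real.Gamma) y = Real.log y := by
    intro y hy
    simp only [Function.comp]
    rw [Real.Gamma_add_one hy.ne', Real.log_mul hy.ne' (Real.Gamma_pos_of_pos hy).ne']
    ring
  constructor
  · have := Real.convexOn_log_Gamma.slope_le_of_hasDerivAt (x := x) (y := x + 1) hx hx1
      (by linarith) hd
    rw [slope_def_field, hstep x hx] at this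
    simpa using this
  · have := Real.convexOn_log_Gamma.le_slope_of_hasDerivAt (x := x + 1) (y := x + 1 + 1) hx1
      (by simp; linarith) (by linarith) hd
    rw [slope_def_field, hstep _ hx1] at this
    simpa using this

theorem digamma_add_nat {w : ℂ} (hw : 0 < w.re) (N : ℕ) :
    digamma (w + N) = digamma w + ∑ n ∈ Finset.range N, (w + n)⁻¹ := by
  induction N with
  | zero => simp
  | succ N ih =>
    rw [Finset.sum_range_succ, ← add_assoc, ← ih, Nat.cast_succ, ← add_assoc,
      digamma_apply_add_one]
    intro m h
    have := congrArg re h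
    simp at this
    linarith [Nat.cast_nonneg (α := ℝ) m, Nat.cast_nonneg (α := ℝ) N]

theorem norm_inv_sub_inv_le {w : ℂ} (hw : 0 ≤ w.re) (n : ℕ) :
    ‖((n : ℂ) + 1)⁻¹ - (n + 1 + w)⁻¹‖ ≤ ‖w‖ / (n + 1) ^ 2 := by
  have h1 : (n : ℂ) + 1 ≠ 0 := by exact_mod_cast n.succ_ne_zero
  have hre : (n + 1 + w : ℂ).re = n + 1 + w.re := by simp
  have h2 : (n : ℝ) + 1 ≤ ‖(n + 1 + w : ℂ)‖ := by
    refine le_trans ?_ ((le_abs_self _).trans (abs_re_le_norm _))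
    rw [hre]; linarith
  have h0 : (0 : ℝ) < n + 1 := by positivity
  have h3 : (n + 1 + w : ℂ) ≠ 0 := norm_pos_iff.1 (h0.trans_le h2)
  have h4 : ((n : ℂ) + 1)⁻¹ - (n + 1 + w)⁻¹ = w / ((n + 1) * (n + 1 + w)) := by
    field_simp; ring
  have h5 : ‖(n : ℂ) + 1‖ = n + 1 := by
    have : ((n : ℂ) + 1) = ((n + 1 : ℝ) : ℂ) := by push_cast; ring
    rw [this, norm_real, Real.norm_of_nonneg h0.le]
  rw [h4, norm_div, norm_mul, h5, sq]
  gcongr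

theorem summable_one_div_succ_sq : Summable fun n : ℕ => 1 / ((n : ℝ) + 1) ^ 2 := by
  have := (summable_nat_add_iff 1).2 (Real.summable_one_div_nat_pow.2 (by norm_num : 1 < 2))
  simpa using this

theorem summable_inv_sub_inv {w : ℂ} (hw : 0 ≤ w.re) :
    Summable fun n : ℕ => ((n : ℂ) + 1)⁻¹ - (n + 1 + w)⁻¹ := by
  refine Summable.of_norm_bounded (summable_one_div_succ_sq.mul_left ‖w‖) fun n => ?_
  rw [mul_one_div]
  exact norm_inv_sub_inv_le hw n

theorem tendsto_digamma_sub {x : ℝ} (hx : 0 ≤ x) :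
    Tendsto (fun N : ℕ => digamma (x + 1 + N) - digamma (1 + N)) atTop (𝓝 0) := by
  have hreal : ∀ N : ℕ, 1 ≤ N → ‖digamma (x + 1 + N) - digamma (1 + N)‖ ≤
      Real.log (x + N + 1) - Real.log N := by
    intro N hN
    have hN' : (0 : ℝ) < N := by exact_mod_cast hN
    have e1 : (x + 1 + N : ℂ) = ((x + N + 1 : ℝ) : ℂ) := by push_cast; ring
    have e2 : (1 + N : ℂ) = ((N + 1 : ℝ) : ℂ) := by push_cast; ring
    have h1 := log_le_digamma_le_log (x := x + N) (by linarith)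
    have h2 := log_le_digamma_le_log hN'
    have h3 : Real.log N ≤ Real.log (x + N) := Real.log_le_log hN' (by linarith)
    have h4 : Real.log (N + 1) ≤ Real.log (x + N + 1) := Real.log_le_log (by linarith) (by linarith)
    rw [e1, e2]
    rw [digamma_ofReal (by linarith), digamma_ofReal (by linarith)] at *
    simp only [ofReal_re] at h1 h2
    rw [← ofReal_sub, norm_real, Real.norm_eq_abs, abs_le]
    constructor <;> linarith [h1.1, h1.2, h2.1, h2.2]
  have hlim : Tendsto (fun N : ℕ => Real.log (x + N + 1) - Real.log N) atTop (𝓝 0) := by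
    have h1 : Tendsto (fun N : ℕ => Real.log (1 + (x + 1) / N)) atTop (𝓝 0) := by
      have h2 : Tendsto (fun N : ℕ => 1 + (x + 1) / (N : ℝ)) atTop (𝓝 (1 + 0)) :=
        (tendsto_const_div_atTop_nhds_zero_nat (x + 1)).const_add 1
      rw [add_zero] at h2
      have h3 := (Real.continuousAt_log one_ne_zero).tendsto.comp h2
      rwa [Real.log_one] at h3
    refine h1.congr' ?_
    filter_upwards [eventually_ge_atTop 1] with N hN
    have hN' : (0 : ℝ) < N := by exact_mod_cast hN
    rw [← Real.log_div (by positivity) hN'.ne']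
    congr 1
    field_simp
    ring
  refine squeeze_zero_norm' ?_ hlim
  filter_upwards [eventually_ge_atTop 1] with N hN using hreal N hN

theorem hasSum_digamma_ofReal {x : ℝ} (hx : 0 ≤ x) :
    HasSum (fun n : ℕ => ((n : ℂ) + 1)⁻¹ - ((n : ℂ) + 1 + (x : ℂ))⁻¹) (digamma (x + 1) - digamma 1) := by
  have hs := summable_inv_sub_inv (w := x) (by simpa)
  have h1 := hs.hasSum.tendsto_sum_nat
  have h2 := tendsto_digamma_sub hx
  have h3 : (fun N : ℕ => digamma (x + 1 + N) - digamma (1 + N)) = fun N : ℕ =>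
      (digamma (x + 1) - digamma 1)
        - ∑ n ∈ Finset.range N, (((n : ℂ) + 1)⁻¹ - ((n : ℂ) + 1 + (x : ℂ))⁻¹) := by
    ext N
    rw [digamma_add_nat (by simp; linarith), digamma_add_nat (by simp), Finset.sum_sub_distrib]
    have e1 : ∀ n : ℕ, ((x : ℂ) + 1 + n)⁻¹ = ((n : ℂ) + 1 + (x : ℂ))⁻¹ := fun n => by congr 1; ring
    have e2 : ∀ n : ℕ, (1 + n : ℂ)⁻¹ = ((n : ℂ) + 1)⁻¹ := fun n => by congr 1; ring
    simp only [e1, e2]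
    ring
  rw [h3] at h2
  have h4 := h1.const_sub (digamma (x + 1) - digamma 1)
  have h5 := tendsto_nhds_unique h2 h4
  rw [sub_eq_zero.1 h5.symm]
  exact hs.hasSum

theorem differentiableOn_tsum_inv_sub_inv :
    DifferentiableOn ℂ (fun w : ℂ => ∑' n : ℕ, (((n : ℂ) + 1)⁻¹ - (n + 1 + w)⁻¹))
      {w | 0 < w.re} := by
  intro w hw
  have hopen : IsOpen ({w : ℂ | 0 < w.re} ∩ Metric.ball 0 (‖w‖ + 1)) :=
    (isOpen_lt continuous_const continuous_re).inter Metric.isOpen_ball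
  have h := differentiableOn_tsum_of_summable_norm
    (F := fun (n : ℕ) (w : ℂ) => ((n : ℂ) + 1)⁻¹ - (n + 1 + w)⁻¹)
    (summable_one_div_succ_sq.mul_left (‖w‖ + 1)) (fun n => ?_) hopen
    (fun n v hv => ?_)
  · have hmem : w ∈ {w : ℂ | 0 < w.re} ∩ Metric.ball 0 (‖w‖ + 1) := ⟨hw, by simp⟩
    exact (h.differentiableAt (hopen.mem_nhds hmem)).differentiableWithinAt
  · refine DifferentiableOn.fun_sub (by fun_prop) (DifferentiableOn.fun_inv (by fun_prop) ?_)
    intro v hv h0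
    have hv0 : 0 < v.re := hv.1
    have := congrArg re h0
    simp at this
    linarith [Nat.cast_nonneg (α := ℝ) n]
  · rw [mul_one_div]
    refine (norm_inv_sub_inv_le (le_of_lt hv.1) n).trans ?_
    have := hv.2
    rw [mem_ball_zero_iff] at this
    gcongr

theorem differentiableAt_digamma {w : ℂ} (hw : 0 < w.re) : DifferentiableAt ℂ digamma w := by
  have hopen : IsOpen {w : ℂ | 0 < w.re} := isOpen_lt continuous_const continuous_re
  have hG : DifferentiableOn ℂ Gamma {w : ℂ | 0 < w.re} := fun v hv =>
    (differentiableAt_Gamma v fun m h => by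
      have hv : 0 < v.re := hv
      have := congrArg re h
      simp at this
      linarith [Nat.cast_nonneg (α := ℝ) m]).differentiableWithinAt
  have h := (hG.deriv hopen).div hG (fun v hv => Gamma_ne_zero_of_re_pos hv)
  exact h.differentiableAt (hopen.mem_nhds hw)

theorem hasSum_digamma {w : ℂ} (hw : 0 < w.re) :
    HasSum (fun n : ℕ => ((n : ℂ) + 1)⁻¹ - (n + 1 + w)⁻¹) (digamma (w + 1) - digamma 1) := by
  have hopen : IsOpen {w : ℂ | 0 < w.re} := isOpen_lt continuous_const continuous_re
  have hd : DifferentiableOn ℂ (fun w => digamma (w + 1) - digamma 1) {w | 0 < w.re} := by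
    intro v hv
    have hv : 0 < v.re := hv
    have h1 : DifferentiableAt ℂ (fun w => digamma (w + 1)) v :=
      DifferentiableAt.comp v (differentiableAt_digamma (by simp; linarith)) (by fun_prop)
    exact (h1.sub_const _).differentiableWithinAt
  have heq := (hd.analyticOnNhd hopen).eqOn_of_preconnected_of_frequently_eq
    (differentiableOn_tsum_inv_sub_inv.analyticOnNhd hopen)
    (convex_halfSpace_re_gt 0).isPreconnected (z₀ := 1) (by simp) ?_
  · have := heq hw
    simp only at this
    rw [this]
    exact (summable_inv_sub_inv hw.le).hasSum
  · have hmap : Tendsto (fun x : ℝ => (x : ℂ)) (𝓝[>] 1) (𝓝[≠] 1) := by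
      refine tendsto_nhdsWithin_iff.2 ⟨?_, ?_⟩
      · exact (continuous_ofReal.tendsto' 1 1 (by simp)).mono_left nhdsWithin_le_nhds
      · filter_upwards [self_mem_nhdsWithin] with x hx
        have hx : 1 < x := hx
        simpa using hx.ne'
    refine hmap.frequently (Eventually.frequently ?_)
    filter_upwards [self_mem_nhdsWithin] with x hx
    have hx : 1 < x := hx
    exact (hasSum_digamma_ofReal (by linarith)).tsum_eq.symm

theorem exists_norm_digamma_le : ∃ C : ℝ, 0 ≤ C ∧ ∀ w : ℂ, 0 < w.re →
    ‖digamma (w + 1)‖ ≤ C * normWeight (1 / 4) w := by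
  have hsum : Summable fun n : ℕ => 1 / ((n : ℝ) + 1) ^ (3 / 2 : ℝ) := by
    have := (summable_nat_add_iff 1).2
      (Real.summable_one_div_nat_rpow.2 (by norm_num : (1 : ℝ) < 3 / 2))
    simpa using this
  refine ⟨‖digamma 1‖ + ∑' n : ℕ, 1 / ((n : ℝ) + 1) ^ (3 / 2 : ℝ),
    add_nonneg (norm_nonneg _) (tsum_nonneg fun n => by positivity), fun w hw => ?_⟩
  have hW : 1 ≤ normWeight (1 / 4) w :=
    Real.one_le_rpow (by nlinarith [sq_nonneg ‖w‖]) (by norm_num)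
  have hterm : ∀ n : ℕ, ‖((n : ℂ) + 1)⁻¹ - (n + 1 + w)⁻¹‖ ≤
      1 / ((n : ℝ) + 1) ^ (3 / 2 : ℝ) * normWeight (1 / 4) w := by
    intro n
    have h0 : (0 : ℝ) < n + 1 := by positivity
    have h1 : (n : ℂ) + 1 ≠ 0 := by exact_mod_cast n.succ_ne_zero
    have hsq : 2 * (n + 1) * ‖w‖ ≤ ‖(n + 1 + w : ℂ)‖ ^ 2 := by
      have e1 : ‖(n + 1 + w : ℂ)‖ ^ 2 = (n + 1 + w.re) ^ 2 + w.im ^ 2 := by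
        rw [← normSq_eq_norm_sq, normSq_apply]; simp; ring
      have e2 : ‖w‖ ^ 2 = w.re ^ 2 + w.im ^ 2 := by
        rw [← normSq_eq_norm_sq, normSq_apply]; ring
      rw [e1]
      nlinarith [sq_nonneg (n + 1 - ‖w‖)]
    have hw0 : 0 < ‖w‖ := norm_pos_iff.2 (by rintro rfl; simp at hw)
    have h3 : (n + 1 + w : ℂ) ≠ 0 := by
      intro h
      rw [h] at hsq
      simp at hsq
      nlinarith [mul_pos h0 hw0]
    have h4 : ((n : ℂ) + 1)⁻¹ - (n + 1 + w)⁻¹ = w / ((n + 1) * (n + 1 + w)) := by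
      field_simp; ring
    have h5 : ‖(n : ℂ) + 1‖ = n + 1 := by
      have : ((n : ℂ) + 1) = ((n + 1 : ℝ) : ℂ) := by push_cast; ring
      rw [this, norm_real, Real.norm_of_nonneg h0.le]
    rw [h4, norm_div, norm_mul, h5]
    have h6 : (n + 1 : ℝ) ^ (1 / 2 : ℝ) * ‖w‖ ^ (1 / 2 : ℝ) ≤ ‖(n + 1 + w : ℂ)‖ := by
      rw [← Real.mul_rpow h0.le hw0.le, ← Real.sqrt_eq_rpow]
      refine Real.sqrt_le_iff.2 ⟨norm_nonneg _, le_trans ?_ hsq⟩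
      nlinarith [mul_pos h0 hw0]
    have h7 : ‖w‖ ^ (1 / 2 : ℝ) ≤ normWeight (1 / 4) w := by
      have : ‖w‖ ^ (1 / 2 : ℝ) = (‖w‖ ^ 2) ^ (1 / 4 : ℝ) := by
        rw [← Real.rpow_natCast, ← Real.rpow_mul hw0.le]; norm_num
      rw [this]
      exact Real.rpow_le_rpow (by positivity) (by linarith) (by norm_num)
    have h8 : ((n : ℝ) + 1) ^ (3 / 2 : ℝ) = (n + 1) * (n + 1) ^ (1 / 2 : ℝ) := by
      rw [show (3 / 2 : ℝ) = 1 + 1 / 2 by norm_num, Real.rpow_add h0, Real.rpow_one]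
    have h9 : ‖w‖ = ‖w‖ ^ (1 / 2 : ℝ) * ‖w‖ ^ (1 / 2 : ℝ) := by
      rw [← Real.rpow_add hw0]; norm_num
    rw [h8, div_le_iff₀ (mul_pos h0 (norm_pos_iff.2 h3)), one_div, mul_inv]
    calc ‖w‖ = ‖w‖ ^ (1 / 2 : ℝ) * ‖w‖ ^ (1 / 2 : ℝ) := h9
      _ ≤ ‖w‖ ^ (1 / 2 : ℝ) * normWeight (1 / 4) w := by gcongr
      _ = ((n + 1 : ℝ) ^ (1 / 2 : ℝ))⁻¹ * normWeight (1 / 4) w *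
          ((n + 1 : ℝ) ^ (1 / 2 : ℝ) * ‖w‖ ^ (1 / 2 : ℝ)) := by
          field_simp
      _ ≤ ((n + 1 : ℝ) ^ (1 / 2 : ℝ))⁻¹ * normWeight (1 / 4) w * ‖(n + 1 + w : ℂ)‖ := by
          have := normWeight_pos (1 / 4) w
          gcongr
      _ = _ := by field_simp
  have h1 := tsum_of_norm_bounded ((hsum.hasSum).mul_right (normWeight (1 / 4) w)) hterm
  rw [(hasSum_digamma hw).tsum_eq] at h1
  have h2 : ‖digamma (w + 1)‖ ≤ ‖digamma (w + 1) - digamma 1‖ + ‖digamma 1‖ := by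
    simpa using norm_add_le (digamma (w + 1) - digamma 1) (digamma 1)
  nlinarith [norm_nonneg (digamma 1)]

theorem entireXi_eq_Gamma_mul {s : ℂ} (hs : 0 < s.re) :
    entireXi s = 2 * (Real.pi : ℂ) ^ (-s / 2) * Gamma (s / 2 + 1) * riemannZeta₁ s := by
  have hs0 : s / 2 ≠ 0 := by
    intro h
    have : s = 0 := by simpa using h
    rw [this] at hs
    simp at hs
  rw [entireXi_eq_mul hs, Gammaℝ_def, Gamma_add_one _ hs0]
  ring

/-- The contribution of the Gamma factor to the logarithmic derivative of `entireXi`. -/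
noncomputable def gammaLogDeriv (s : ℂ) : ℂ :=
  -(Real.log Real.pi / 2) + digamma (s / 2 + 1) / 2

theorem logDeriv_entireXi_eq {s : ℂ} (hs : 0 < s.re) (hz : riemannZeta₁ s ≠ 0) :
    logDeriv entireXi s = logDeriv riemannZeta₁ s + gammaLogDeriv s := by
  have hpi : (Real.pi : ℂ) ≠ 0 := by exact_mod_cast Real.pi_ne_zero
  have hre : 0 < (s / 2 + 1).re := by simp; linarith
  have hG0 := Gamma_ne_zero_of_re_pos hre
  have hGd : DifferentiableAt ℂ Gamma (s / 2 + 1) := differentiableAt_Gamma _ fun m h => by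
    rw [h] at hre
    simp at hre
    linarith [Nat.cast_nonneg (α := ℝ) m]
  have h1 : HasDerivAt (fun w : ℂ => (Real.pi : ℂ) ^ (-w / 2))
      ((Real.pi : ℂ) ^ (-s / 2) * Complex.log Real.pi * (-1 / 2)) s :=
    ((hasDerivAt_id' s).fun_neg.div_const 2).const_cpow (Or.inl hpi)
  have h2 : HasDerivAt (fun w : ℂ => Gamma (w / 2 + 1)) (deriv Gamma (s / 2 + 1) * (1 / 2)) s :=
    HasDerivAt.comp s hGd.hasDerivAt (((hasDerivAt_id' s).div_const 2).add_const 1)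
  have h3 := (differentiable_riemannZeta₁ s).hasDerivAt
  have h4 := ((h1.const_mul 2).fun_mul h2).fun_mul h3
  have heq : entireXi =ᶠ[𝓝 s]
      fun w => 2 * (Real.pi : ℂ) ^ (-w / 2) * Gamma (w / 2 + 1) * riemannZeta₁ w := by
    filter_upwards [(isOpen_lt continuous_const continuous_re).mem_nhds hs] with w hw
    exact entireXi_eq_Gamma_mul hw
  have h5 : (Real.pi : ℂ) ^ (-s / 2) ≠ 0 := by simp [cpow_eq_zero_iff, hpi]
  rw [logDeriv_apply, logDeriv_apply, heq.deriv_eq, h4.deriv, entireXi_eq_Gamma_mul hs,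
    gammaLogDeriv, digamma_def, logDeriv_apply, ofReal_log Real.pi_pos.le]
  generalize Gamma (s / 2 + 1) = A at *
  generalize deriv Gamma (s / 2 + 1) = B at *
  field_simp
  ring

theorem logDeriv_riemannZeta₁_eq {s : ℂ} (hs : 1 < s.re) :
    logDeriv riemannZeta₁ s =
      (s - 1)⁻¹ - LSeries (fun n => (ArithmeticFunction.vonMangoldt n : ℂ)) s := by
  have hs1 : s ≠ 1 := by rintro rfl; simp at hs
  have h1 : riemannZeta₁ =ᶠ[𝓝 s] fun w => (w - 1) * riemannZeta w := by
    filter_upwards [isOpen_ne.mem_nhds hs1] with w hw using riemannZeta₁_eq hw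
  have h2 : HasDerivAt (fun w : ℂ => (w - 1) * riemannZeta w)
      (1 * riemannZeta s + (s - 1) * deriv riemannZeta s) s :=
    ((hasDerivAt_id' s).sub_const 1).fun_mul (differentiableAt_riemannZeta hs1).hasDerivAt
  have h3 := riemannZeta_ne_zero_of_one_le_re hs.le
  have h4 := sub_ne_zero.2 hs1
  rw [logDeriv_apply, h1.deriv_eq, h2.deriv, riemannZeta₁_eq hs1,
    ArithmeticFunction.LSeries_vonMangoldt_eq_deriv_riemannZeta_div hs]
  field_simp
  ring

theorem differentiableOn_logDeriv_entireXi (hRH : RiemannHypothesis) :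
    DifferentiableOn ℂ (logDeriv entireXi) {s | 1 / 2 < s.re} := by
  intro s hs
  have h1 : DifferentiableAt ℂ (deriv entireXi) s :=
    (differentiable_entireXi.analyticAt s).deriv.differentiableAt
  exact (h1.div (differentiable_entireXi s)
    (entireXi_ne_zero_of_RH hRH hs)).differentiableWithinAt

theorem one_le_normWeight {p : ℝ} (hp : 0 ≤ p) (z : ℂ) : 1 ≤ normWeight p z :=
  Real.one_le_rpow (by nlinarith [sq_nonneg ‖z‖]) hp

theorem normWeight_le_mul {p A : ℝ} (hp : 0 ≤ p) (hp1 : p ≤ 1) (hA : 1 ≤ A) {z w : ℂ}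
    (h : 1 + ‖z‖ ^ 2 ≤ A * (1 + ‖w‖ ^ 2)) : normWeight p z ≤ A * normWeight p w := by
  unfold normWeight
  calc (1 + ‖z‖ ^ 2) ^ p ≤ (A * (1 + ‖w‖ ^ 2)) ^ p := Real.rpow_le_rpow (by positivity) h hp
    _ = A ^ p * (1 + ‖w‖ ^ 2) ^ p := Real.mul_rpow (by linarith) (by positivity)
    _ ≤ A * (1 + ‖w‖ ^ 2) ^ p := by
      gcongr
      simpa using Real.rpow_le_rpow_of_exponent_le hA hp1

theorem exists_norm_gammaLogDeriv_le :
    ∃ K : ℝ, 0 ≤ K ∧ ∀ s : ℂ, 0 < s.re → ‖gammaLogDeriv s‖ ≤ K * normWeight (1 / 4) s := by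
  obtain ⟨C, hC, h⟩ := exists_norm_digamma_le
  refine ⟨‖(Real.log Real.pi / 2 : ℂ)‖ + C, by positivity, fun s hs => ?_⟩
  have h1 := h (s / 2) (by simp; linarith)
  have h2 : normWeight (1 / 4) (s / 2) ≤ 1 * normWeight (1 / 4) s := by
    refine normWeight_le_mul (by norm_num) (by norm_num) le_rfl ?_
    rw [norm_div]
    norm_num
    nlinarith [sq_nonneg ‖s‖]
  have h3 := one_le_normWeight (p := 1 / 4) (by norm_num) s
  have h4 : ‖gammaLogDeriv s‖ ≤ ‖(Real.log Real.pi / 2 : ℂ)‖ + ‖digamma (s / 2 + 1)‖ / 2 := by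
    unfold gammaLogDeriv
    refine (norm_add_le _ _).trans ?_
    rw [norm_neg, norm_div (digamma _)]
    simp
  have h5 : ‖digamma (s / 2 + 1)‖ ≤ C * normWeight (1 / 4) s :=
    h1.trans (mul_le_mul_of_nonneg_left (by linarith) hC)
  nlinarith [norm_nonneg (Real.log Real.pi / 2 : ℂ), norm_nonneg (digamma (s / 2 + 1)),
    mul_nonneg (norm_nonneg (Real.log Real.pi / 2 : ℂ)) (sub_nonneg.2 h3)]

theorem exists_norm_logDeriv_entireXi_le_of_two_le :
    ∃ K : ℝ, 0 ≤ K ∧ ∀ s : ℂ, 2 ≤ s.re → ‖logDeriv entireXi s‖ ≤ K * normWeight (1 / 4) s := by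
  obtain ⟨K, hK, h⟩ := exists_norm_gammaLogDeriv_le
  obtain ⟨C, hC, h'⟩ := exists_norm_inv_riemannZeta_le (σ := 2) (by norm_num)
  refine ⟨K + (1 + C), by positivity, fun s hs => ?_⟩
  have hs1 : s ≠ 1 := by rintro rfl; norm_num at hs
  have hz : riemannZeta₁ s ≠ 0 := by
    rw [riemannZeta₁_eq hs1]
    exact mul_ne_zero (sub_ne_zero.2 hs1) (riemannZeta_ne_zero_of_one_le_re (by linarith))
  rw [logDeriv_entireXi_eq (by linarith) hz, logDeriv_riemannZeta₁_eq (by linarith)]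
  have h1 : ‖(s - 1)⁻¹‖ ≤ 1 := by
    rw [norm_inv]
    refine inv_le_one_of_one_le₀ ?_
    have := (le_abs_self _).trans (abs_re_le_norm (s - 1))
    rw [sub_re, one_re] at this
    linarith
  have h2 := (h' s hs).2.2
  have h3 := h s (by linarith)
  have h4 := one_le_normWeight (p := 1 / 4) (by norm_num) s
  refine (norm_add_le _ _).trans ?_
  have h5 := norm_sub_le (s - 1)⁻¹ (LSeries (fun n => (ArithmeticFunction.vonMangoldt n : ℂ)) s)
  nlinarith

theorem exists_norm_logDeriv_entireXi_le (hRH : RiemannHypothesis) {c : ℝ} (hc : 0 < c)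
    (hc' : c ≤ 1 / 2) :
    ∃ K : ℝ, 0 ≤ K ∧ ∀ s : ℂ, 1 / 2 + c ≤ s.re →
      ‖logDeriv entireXi s‖ ≤ K * normWeight (1 / 4) s := by
  obtain ⟨K, hK, h⟩ := exists_norm_logDeriv_entireXi_le_of_two_le
  refine ⟨6 / c * (10 * K + 1) + K, by positivity, fun s hs => ?_⟩
  have hW := one_le_normWeight (p := 1 / 4) (by norm_num) s
  have hWp := normWeight_pos (1 / 4) s
  rcases le_total 2 s.re with h2 | h2
  · refine (h s h2).trans (mul_le_mul_of_nonneg_right ?_ hWp.le)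
    have : 0 ≤ 6 / c * (10 * K + 1) := by positivity
    linarith
  set p : ℂ := 2 + s.im * I with hp
  have hpn : ‖p‖ ^ 2 = 4 + s.im ^ 2 := by
    rw [← normSq_eq_norm_sq, normSq_apply]; simp [hp]; ring
  have hsn : ‖s‖ ^ 2 = s.re ^ 2 + s.im ^ 2 := by
    rw [← normSq_eq_norm_sq, normSq_apply]; ring
  have hGp : ‖logDeriv entireXi p‖ ≤ 10 * K * normWeight (1 / 4) s := by
    refine (h p (by simp [hp])).trans ?_
    have := normWeight_le_mul (p := 1 / 4) (A := 10) (by norm_num) (by norm_num) (by norm_num)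
      (z := p) (w := s) (by rw [hpn, hsn]; nlinarith [sq_nonneg s.re, sq_nonneg s.im])
    calc _ ≤ K * (10 * normWeight (1 / 4) s) := by gcongr
      _ = _ := by ring
  have hmem : ∀ w ∈ Metric.ball (0 : ℂ) (3 / 2), 1 / 2 < (p + w).re := by
    intro w hw
    rw [mem_ball_zero_iff] at hw
    have := neg_le_of_abs_le (abs_re_le_norm w)
    simp [hp]
    linarith
  have hsp : s - p = ((s.re - 2 : ℝ) : ℂ) := by
    apply Complex.ext <;> simp [hp]
  have hspn : ‖s - p‖ = 2 - s.re := by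
    rw [hsp, norm_real, Real.norm_eq_abs, abs_of_nonpos (by linarith)]; ring
  have hBC := borelCaratheodory (f := fun w => -logDeriv entireXi (p + w))
    (M := ‖logDeriv entireXi p‖ + 1) (R := 3 / 2) (z := s - p) (by positivity)
    (fun w hw => (((differentiableOn_logDeriv_entireXi hRH).differentiableAt
      ((isOpen_lt continuous_const continuous_re).mem_nhds (hmem w hw))).comp w
        (by fun_prop)).fun_neg.differentiableWithinAt)
    (fun w hw => by
      have := re_logDeriv_entireXi_nonneg hRH (hmem w hw)
      have h3 := norm_nonneg (logDeriv entireXi p)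
      change (-logDeriv entireXi (p + w)).re ≤ _
      rw [neg_re]
      linarith) (by norm_num) (by rw [mem_ball_zero_iff, hspn]; linarith)
  simp only [add_sub_cancel, norm_neg, add_zero, hspn] at hBC
  rw [← add_div] at hBC
  have hden : c ≤ 3 / 2 - (2 - s.re) := by linarith
  set g := ‖logDeriv entireXi p‖ with hg
  have hg0 : 0 ≤ g := norm_nonneg _
  have hnum : 2 * (g + 1) * (2 - s.re) + g * (3 / 2 + (2 - s.re)) ≤ 6 * (g + 1) := by
    nlinarith
  calc ‖logDeriv entireXi s‖ ≤ _ := hBC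
    _ ≤ 6 * (g + 1) / c := by
      refine div_le_div₀ (by positivity) hnum hc hden
    _ = 6 / c * (g + 1) := by ring
    _ ≤ 6 / c * (10 * K * normWeight (1 / 4) s + 1 * normWeight (1 / 4) s) := by
      gcongr
      linarith
    _ = 6 / c * (10 * K + 1) * normWeight (1 / 4) s := by ring
    _ ≤ _ := by
      gcongr
      linarith

theorem exists_normWeight_neg_bound_mul (p q : ℂ) {δ : ℝ} (hδ : 0 < δ) :
    ∃ C : ℝ, 0 ≤ C ∧ ∀ z : ℂ, δ ≤ ‖z - p‖ → δ ≤ ‖z - q‖ →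
      (‖z - p‖ * ‖z - q‖)⁻¹ ≤ C * normWeight (-1) z := by
  obtain ⟨C1, h1, hC1⟩ := exists_normWeight_neg_bound p hδ
  obtain ⟨C2, h2, hC2⟩ := exists_normWeight_neg_bound q hδ
  refine ⟨C1 + C2, by positivity, fun z hp hq => ?_⟩
  have h3 := hC1 z hp
  have h4 := hC2 z hq
  rw [← inv_pow] at h3 h4
  rw [mul_inv]
  nlinarith [sq_nonneg (‖z - p‖⁻¹ - ‖z - q‖⁻¹), sq_nonneg (‖z - p‖⁻¹ + ‖z - q‖⁻¹)]

/-- The value of `logDeriv entireXi` at `1`. -/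
noncomputable def xiConst : ℝ := (Real.eulerMascheroniConstant - Real.log (4 * Real.pi)) / 2 + 1

theorem logDeriv_entireXi_one : logDeriv entireXi 1 = xiConst := by
  rw [logDeriv_apply, entireXi_one, deriv_entireXi_one, completedRiemannZeta₀_one, xiConst,
    div_one]
  rw [← show ((Real.log (4 * Real.pi) : ℝ) : ℂ) = Complex.log (4 * Real.pi) by
    rw [ofReal_log (by positivity)]; push_cast; rfl]
  push_cast
  ring

theorem norm_logDeriv_div_le {K : ℝ} {s : ℂ} {D : ℂ} {C : ℝ} (hK : 0 ≤ K)
    (hG : ‖logDeriv entireXi s‖ ≤ K * normWeight (1 / 4) s)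
    (hD : ‖D‖⁻¹ ≤ C * normWeight (-1) s) :
    ‖logDeriv entireXi s / D‖ ≤ K * C * normWeight (-(3 / 4)) s := by
  rw [norm_div, div_eq_mul_inv, show -(3 / 4 : ℝ) = 1 / 4 + -1 by norm_num, normWeight_add]
  have := normWeight_pos (1 / 4) s
  calc _ ≤ K * normWeight (1 / 4) s * (C * normWeight (-1) s) := by gcongr
    _ = _ := by ring

theorem integral_univ_inv_sq_add_sq {b : ℝ} (hb : 0 < b) :
    ∫ y : ℝ, (b ^ 2 + y ^ 2)⁻¹ = Real.pi / b := by
  have h := integral_univ_inv_one_add_sq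
  have h1 := Measure.integral_comp_div (fun y : ℝ => (1 + y ^ 2)⁻¹) b
  rw [h, abs_of_pos hb, smul_eq_mul] at h1
  have h2 : ∀ y : ℝ, (b ^ 2 + y ^ 2)⁻¹ = (b ^ 2)⁻¹ * (1 + (y / b) ^ 2)⁻¹ := by
    intro y
    rw [← mul_inv]
    congr 1
    field_simp
  simp_rw [h2]
  rw [integral_const_mul, h1]
  field_simp

theorem one_sub_le_norm_sub_left {σ : ℝ} {s : ℂ} (hs : σ ≤ s.re) :
    1 - σ ≤ ‖s - (2 * σ - 1 : ℝ)‖ := by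
  refine le_trans ?_ ((le_abs_self _).trans (abs_re_le_norm _))
  rw [sub_re, ofReal_re]
  linarith

theorem integral_logDeriv_div_normSq (hRH : RiemannHypothesis) {σ : ℝ} (h1 : 1 / 2 < σ) (h2 : σ < 1) :
    Integrable (fun y : ℝ => logDeriv entireXi (σ + y * I) / (((1 - σ) ^ 2 + y ^ 2 : ℝ) : ℂ)) ∧
    ∫ y : ℝ, logDeriv entireXi (σ + y * I) / (((1 - σ) ^ 2 + y ^ 2 : ℝ) : ℂ)
      = (xiConst * (Real.pi / (1 - σ)) : ℝ) := by
  obtain ⟨K, hK, hG⟩ := exists_norm_logDeriv_entireXi_le hRH (c := σ - 1 / 2) (by linarith)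
    (by linarith)
  have hopen : IsOpen {s : ℂ | 1 / 2 < s.re} := isOpen_lt continuous_const continuous_re
  have hd := differentiableOn_logDeriv_entireXi hRH
  have hsub : {s : ℂ | σ ≤ s.re} ⊆ {s : ℂ | 1 / 2 < s.re} := fun s hs => h1.trans_le hs
  have hds : DifferentiableOn ℂ (dslope (logDeriv entireXi) 1) {s | 1 / 2 < s.re} :=
    (differentiableOn_dslope (hopen.mem_nhds (by norm_num))).2 hd
  set p : ℂ := ((2 * σ - 1 : ℝ) : ℂ) with hp
  have hpne : ∀ s : ℂ, σ ≤ s.re → p - s ≠ 0 := by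
    intro s hs h
    have := one_sub_le_norm_sub_left hs
    rw [← hp, norm_sub_rev, h, norm_zero] at this
    linarith
  set Φ : ℂ → ℂ := fun s => dslope (logDeriv entireXi) 1 s / (p - s) with hΦ
  have hΦd : DifferentiableOn ℂ Φ {s | σ ≤ s.re} :=
    DifferentiableOn.fun_div (hds.mono hsub) (by fun_prop) hpne
  obtain ⟨C, hC, hCb⟩ := exists_normWeight_neg_bound_mul 1 p (δ := 1 - σ) (by linarith)
  obtain ⟨K', hK'⟩ := exists_bound_of_bound_away (S := {s : ℂ | σ ≤ s.re})
    (isClosed_le continuous_const continuous_re) hΦd.continuousOn 1 (δ := 1 - σ)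
    (K := (K + ‖(xiConst : ℂ)‖) * C) (q := -(3 / 4)) (by
      intro s hs hs1
      have hne : s ≠ 1 := by
        rintro rfl
        simp at hs1
        linarith
      have hW := one_le_normWeight (p := 1 / 4) (by norm_num) s
      have h4 := hG s (by simpa using hs)
      have h5 := hCb s hs1 (one_sub_le_norm_sub_left hs)
      have h6 : ‖logDeriv entireXi s - logDeriv entireXi 1‖
          ≤ (K + ‖(xiConst : ℂ)‖) * normWeight (1 / 4) s := by
        refine (norm_sub_le _ _).trans ?_
        rw [logDeriv_entireXi_one]
        nlinarith [norm_nonneg (xiConst : ℂ)]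
      rw [hΦ]
      simp only
      rw [dslope_of_ne _ hne, slope_def_field, div_div, norm_div, norm_mul, norm_sub_rev p,
        div_eq_mul_inv, show -(3 / 4 : ℝ) = 1 / 4 + -1 by norm_num, normWeight_add]
      have := normWeight_pos (1 / 4) s
      calc _ ≤ (K + ‖(xiConst : ℂ)‖) * normWeight (1 / 4) s * (C * normWeight (-1) s) := by gcongr
        _ = _ := by ring)
  have hzero := integral_vertical_eq_zero (by norm_num) hΦd hK'
  have hsq : ∀ y : ℝ, (((1 - σ) ^ 2 + y ^ 2 : ℝ) : ℂ) = (σ + y * I - 1) * (p - (σ + y * I)) := by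
    intro y
    rw [hp]
    push_cast
    ring_nf
    rw [I_sq]
    ring
  have h_integ : Integrable
      (fun y : ℝ => logDeriv entireXi (σ + y * I) / (((1 - σ) ^ 2 + y ^ 2 : ℝ) : ℂ)) := by
    have hne1 : ∀ s : ℂ, s.re = σ → s - 1 ≠ 0 := by
      intro s hs h
      have := congrArg re h
      simp [hs] at this
      linarith
    have h7 := integrable_vertical_of_norm_le (a := σ) (K := K * C) (q := 3 / 4)
      (Φ := fun s => logDeriv entireXi s / ((s - 1) * (p - s))) (by norm_num)
      (ContinuousOn.div (hd.continuousOn.mono fun s hs => hsub (le_of_eq (Eq.symm hs)))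
        (by fun_prop)
        fun s hs => mul_ne_zero (hne1 s hs) (hpne s (le_of_eq (Eq.symm hs)))) (fun y => by
          refine (norm_logDeriv_div_le (K := K) (C := C) hK (hG _ (by simp)) ?_).trans
            (mul_le_mul_of_nonneg_left (normWeight_vertical_le' (by norm_num) σ y) (by positivity))
          rw [norm_mul, norm_sub_rev p]
          refine hCb _ ?_ (one_sub_le_norm_sub_left (by simp))
          refine le_trans ?_ ((neg_le_abs _).trans (abs_re_le_norm _))
          simp)
    refine h7.congr (Eventually.of_forall fun y => ?_)
    simp only
    rw [hsq]
  have h_integ2 : Integrable (fun y : ℝ => (xiConst : ℂ) / (((1 - σ) ^ 2 + y ^ 2 : ℝ) : ℂ)) := by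
    have h8 : Integrable (fun y : ℝ => ((1 - σ) ^ 2 + y ^ 2)⁻¹) := by
      by_contra h
      have h9 := integral_univ_inv_sq_add_sq (b := 1 - σ) (by linarith)
      rw [integral_undef h] at h9
      have : 0 < Real.pi / (1 - σ) := div_pos Real.pi_pos (by linarith)
      linarith
    refine (h8.ofReal.const_mul (xiConst : ℂ)).congr (Eventually.of_forall fun y => ?_)
    simp [div_eq_mul_inv]
  refine ⟨h_integ, ?_⟩
  have h10 : ∀ y : ℝ, Φ (σ + y * I)
      = logDeriv entireXi (σ + y * I) / (((1 - σ) ^ 2 + y ^ 2 : ℝ) : ℂ)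
        - (xiConst : ℂ) / (((1 - σ) ^ 2 + y ^ 2 : ℝ) : ℂ) := by
    intro y
    have hne : (σ + y * I : ℂ) ≠ 1 := by
      intro h
      have := congrArg re h
      simp at this
      linarith
    rw [hΦ]
    simp only
    rw [dslope_of_ne _ hne, slope_def_field, div_div, hsq, logDeriv_entireXi_one, sub_div]
  simp_rw [h10] at hzero
  rw [integral_sub h_integ h_integ2, sub_eq_zero] at hzero
  rw [hzero]
  have h11 : ∀ y : ℝ, (xiConst : ℂ) / (((1 - σ) ^ 2 + y ^ 2 : ℝ) : ℂ)
      = ((xiConst * ((1 - σ) ^ 2 + y ^ 2)⁻¹ : ℝ) : ℂ) := by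
    intro y
    push_cast
    rw [div_eq_mul_inv]
  simp_rw [h11]
  rw [integral_complex_ofReal, integral_const_mul, integral_univ_inv_sq_add_sq (by linarith)]

theorem vertical_sub_one_ne_zero {σ : ℝ} (h2 : σ < 1) (y : ℝ) : (σ + y * I - 1 : ℂ) ≠ 0 := by
  intro h
  have := congrArg re h
  simp at this
  linarith

theorem norm_vertical_sub_one_sq (σ y : ℝ) :
    ‖(σ + y * I - 1 : ℂ)‖ ^ 2 = (1 - σ) ^ 2 + y ^ 2 := by
  rw [← normSq_eq_norm_sq, normSq_apply]
  simp
  ring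

theorem one_sub_le_norm_vertical_sub_one (σ y : ℝ) : 1 - σ ≤ ‖(σ + y * I - 1 : ℂ)‖ := by
  refine le_trans ?_ ((neg_le_abs _).trans (abs_re_le_norm _))
  simp

theorem integrable_logDeriv_mul_cpow (hRH : RiemannHypothesis) {σ : ℝ} (h1 : 1 / 2 < σ)
    (h2 : σ < 1) {x : ℝ} (hx : 0 < x) :
    Integrable fun y : ℝ =>
      logDeriv entireXi (σ + y * I) * (x : ℂ) ^ (σ + y * I - 1 : ℂ) / (σ + y * I - 1) ^ 2 := by
  obtain ⟨K, hK, hG⟩ := exists_norm_logDeriv_entireXi_le hRH (c := σ - 1 / 2) (by linarith)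
    (by linarith)
  obtain ⟨C, hC, hCb⟩ := exists_normWeight_neg_bound_mul 1 1 (δ := 1 - σ) (by linarith)
  have hd := differentiableOn_logDeriv_entireXi hRH
  have hx0 : (x : ℂ) ≠ 0 := ofReal_ne_zero.2 hx.ne'
  refine integrable_vertical_of_norm_le (a := σ) (K := x ^ (σ - 1) * (K * C)) (q := 3 / 4)
    (Φ := fun s => logDeriv entireXi s * (x : ℂ) ^ (s - 1) / (s - 1) ^ 2) (by norm_num) ?_ ?_
  · refine ContinuousOn.div (ContinuousOn.mul (hd.continuousOn.mono ?_) ?_) (by fun_prop) ?_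
    · intro s hs
      exact h1.trans_le (le_of_eq (Eq.symm hs))
    · exact (Continuous.const_cpow (by fun_prop) (Or.inl hx0)).continuousOn
    · intro s hs
      refine pow_ne_zero 2 fun h => ?_
      have := congrArg re h
      have h3 : s.re = σ := hs
      simp [h3] at this
      linarith
  · intro y
    have h5 := norm_logDeriv_div_le (K := K) (C := C) (s := σ + y * I)
      (D := (σ + y * I - 1) ^ 2) hK (hG _ (by simp)) (by
        rw [norm_pow, sq]
        exact hCb _ (one_sub_le_norm_vertical_sub_one σ y) (one_sub_le_norm_vertical_sub_one σ y))
    have h6 : ‖(x : ℂ) ^ (σ + y * I - 1 : ℂ)‖ = x ^ (σ - 1) := by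
      rw [norm_cpow_eq_rpow_re_of_pos hx]
      simp
    have h7 := mul_le_mul_of_nonneg_left (normWeight_vertical_le' (q := 3 / 4) (by norm_num) σ y)
      (mul_nonneg hK hC)
    rw [mul_div_right_comm, mul_comm, norm_mul, h6, mul_assoc]
    exact mul_le_mul_of_nonneg_left (h5.trans h7) (by positivity)

theorem integral_conj_logDeriv_mul_cpow_eq_zero (hRH : RiemannHypothesis) {σ : ℝ}
    (h1 : 1 / 2 < σ) (h2 : σ < 1) {x : ℝ} (hx : 1 ≤ x) :
    ∫ y : ℝ, (starRingEnd ℂ) (logDeriv entireXi (σ + y * I)) * (x : ℂ) ^ (σ + y * I - 1 : ℂ) /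
      (σ + y * I - 1) ^ 2 = 0 := by
  obtain ⟨K, hK, hG⟩ := exists_norm_logDeriv_entireXi_le hRH (c := σ - 1 / 2) (by linarith)
    (by linarith)
  set p : ℂ := ((2 * σ - 1 : ℝ) : ℂ) with hp
  have hx0 : (0 : ℝ) < x := by linarith
  have hxc : (x : ℂ) ≠ 0 := ofReal_ne_zero.2 hx0.ne'
  obtain ⟨C, hC, hCb⟩ := exists_normWeight_neg_bound_mul p p (δ := 1 - σ) (by linarith)
  have hd := differentiableOn_logDeriv_entireXi hRH
  have hpne : ∀ s : ℂ, σ ≤ s.re → p - s ≠ 0 := by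
    intro s hs h
    have := one_sub_le_norm_sub_left hs
    rw [← hp, norm_sub_rev, h, norm_zero] at this
    linarith
  have hzero := integral_vertical_eq_zero (a := σ) (p := 3 / 4) (K := K * C)
    (Φ := fun s => logDeriv entireXi s / (p - s) ^ 2 * (x : ℂ) ^ (p - s)) (by norm_num)
    (DifferentiableOn.mul (DifferentiableOn.fun_div (hd.mono fun s hs => h1.trans_le hs)
      (by fun_prop) fun s hs => pow_ne_zero 2 (hpne s hs))
      (DifferentiableOn.const_cpow (by fun_prop) (Or.inl hxc))) (by
      intro s hs
      have h5 := norm_logDeriv_div_le (K := K) (C := C) (s := s) (D := (p - s) ^ 2) hK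
        (hG _ (by simpa using hs)) (by
          rw [norm_pow, sq, norm_sub_rev]
          exact hCb _ (one_sub_le_norm_sub_left hs) (one_sub_le_norm_sub_left hs))
      have h6 : ‖(x : ℂ) ^ (p - s)‖ ≤ 1 := by
        rw [norm_cpow_eq_rpow_re_of_pos hx0]
        refine Real.rpow_le_one_of_one_le_of_nonpos hx ?_
        rw [hp, sub_re, ofReal_re]
        have : σ ≤ s.re := hs
        linarith
      rw [norm_mul]
      exact (mul_le_of_le_one_right (norm_nonneg _) h6).trans h5)
  have hconj : ∀ y : ℝ, (starRingEnd ℂ) (logDeriv entireXi (σ + y * I)) *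
      (x : ℂ) ^ (σ + y * I - 1 : ℂ) / (σ + y * I - 1) ^ 2 = (starRingEnd ℂ)
        (logDeriv entireXi (σ + y * I) / (p - (σ + y * I)) ^ 2 *
          (x : ℂ) ^ (p - (σ + y * I))) := by
    intro y
    have h3 : (starRingEnd ℂ) (p - (σ + y * I)) = σ + y * I - 1 := by
      rw [hp]
      simp only [map_sub, map_add, map_mul, conj_ofReal, conj_I]
      push_cast
      ring
    have h4 : (starRingEnd ℂ) ((x : ℂ) ^ (p - (σ + y * I))) = (x : ℂ) ^ (σ + y * I - 1 : ℂ) := by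
      rw [cpow_def_of_ne_zero hxc, cpow_def_of_ne_zero hxc, ← exp_conj, map_mul, h3,
        ← ofReal_log hx0.le, conj_ofReal]
    rw [map_mul, map_div₀, map_pow, h3, h4]
    ring
  simp_rw [hconj]
  rw [integral_conj, hzero, map_zero]

/-- On RH, the nonnegativity of `Re (ξ'/ξ)` to the right of the critical line bounds its
weighted inverse Mellin transform on vertical lines. -/
theorem norm_integral_logDeriv_mul_cpow_le (hRH : RiemannHypothesis) {σ : ℝ} (h1 : 1 / 2 < σ)
    (h2 : σ < 1) {x : ℝ} (hx : 1 ≤ x) :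
    ‖∫ y : ℝ, logDeriv entireXi (σ + y * I) * (x : ℂ) ^ (σ + y * I - 1 : ℂ) /
      (σ + y * I - 1) ^ 2‖ ≤ 2 * x ^ (σ - 1) * (xiConst * (Real.pi / (1 - σ))) := by
  have hx0 : (0 : ℝ) < x := by linarith
  obtain ⟨hi, hv⟩ := integral_logDeriv_div_normSq hRH h1 h2
  have hF := integrable_logDeriv_mul_cpow hRH h1 h2 hx0
  have hE := integral_conj_logDeriv_mul_cpow_eq_zero hRH h1 h2 hx
  have hb : (0 : ℝ) < 1 - σ := by linarith
  have hnorm : ∀ y : ℝ, ∀ c : ℂ, ‖c * (x : ℂ) ^ (σ + y * I - 1 : ℂ) / (σ + y * I - 1) ^ 2‖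
      = x ^ (σ - 1) * (‖c‖ / ((1 - σ) ^ 2 + y ^ 2)) := by
    intro y c
    rw [norm_div, norm_mul, norm_pow, norm_vertical_sub_one_sq, norm_cpow_eq_rpow_re_of_pos hx0]
    simp
    ring
  have hEi : Integrable fun y : ℝ => (starRingEnd ℂ) (logDeriv entireXi (σ + y * I)) *
      (x : ℂ) ^ (σ + y * I - 1 : ℂ) / (σ + y * I - 1) ^ 2 := by
    refine hF.mono ?_ (Eventually.of_forall fun y => ?_)
    · refine Continuous.aestronglyMeasurable ?_
      have hc : Continuous fun y : ℝ => logDeriv entireXi (σ + y * I) := by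
        exact (differentiableOn_logDeriv_entireXi hRH).continuousOn.comp_continuous
          (by fun_prop) fun y => by simpa using h1
      refine Continuous.div (Continuous.mul (continuous_conj.comp hc) ?_) (by fun_prop)
        fun y => pow_ne_zero 2 (vertical_sub_one_ne_zero h2 y)
      exact Continuous.const_cpow (by fun_prop) (Or.inl (ofReal_ne_zero.2 hx0.ne'))
    · rw [hnorm, hnorm, norm_conj]
  rw [← add_zero (∫ y : ℝ, _), ← hE, ← integral_add hF hEi]
  have hsum : ∀ y : ℝ, ‖logDeriv entireXi (σ + y * I) * (x : ℂ) ^ (σ + y * I - 1 : ℂ) /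
      (σ + y * I - 1) ^ 2 + (starRingEnd ℂ) (logDeriv entireXi (σ + y * I)) *
      (x : ℂ) ^ (σ + y * I - 1 : ℂ) / (σ + y * I - 1) ^ 2‖ =
      2 * x ^ (σ - 1) *
        (logDeriv entireXi (σ + y * I) / (((1 - σ) ^ 2 + y ^ 2 : ℝ) : ℂ)).re := by
    intro y
    rw [← add_div, ← add_mul, hnorm, add_conj, norm_real, Real.norm_of_nonneg
      (mul_nonneg zero_le_two (re_logDeriv_entireXi_nonneg hRH (by simpa using h1))), div_ofReal_re]
    ring
  refine (norm_integral_le_integral_norm _).trans (le_of_eq ?_)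
  simp_rw [hsum]
  rw [integral_const_mul]
  congr 1
  have h9 := integral_re hi
  simp only [RCLike.re_to_complex] at h9
  rw [h9, hv, ofReal_re]

/-- `(ξ'/ξ(s) - ξ'/ξ(1)) / (s - 1)²` with the remaining simple pole at `s = 1` removed. -/
noncomputable def xiKernel (s : ℂ) : ℂ :=
  (logDeriv entireXi s - xiConst) / (s - 1) ^ 2 -
    deriv (logDeriv entireXi) 1 / ((s - 1) * (2 - s))

theorem exists_differentiableOn_eq_xiKernel (hRH : RiemannHypothesis) {σ : ℝ} (h1 : 1 / 2 < σ)
    (h2 : σ < 1) : ∃ (Φ : ℂ → ℂ) (K : ℝ),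
      DifferentiableOn ℂ Φ {s | σ ≤ s.re ∧ s.re ≤ 3 / 2} ∧ (∀ s ≠ 1, s.re ≤ 3 / 2 → Φ s = xiKernel s) ∧
      ∀ s : ℂ, σ ≤ s.re ∧ s.re ≤ 3 / 2 → ‖Φ s‖ ≤ K * normWeight (-(3 / 4)) s := by
  obtain ⟨K, hK, hG⟩ := exists_norm_logDeriv_entireXi_le hRH (c := σ - 1 / 2) (by linarith)
    (by linarith)
  set c : ℂ := deriv (logDeriv entireXi) 1 with hc
  have hopen : IsOpen {s : ℂ | 1 / 2 < s.re} := isOpen_lt continuous_const continuous_re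
  have hd := differentiableOn_logDeriv_entireXi hRH
  have hmem : {s : ℂ | 1 / 2 < s.re} ∈ 𝓝 (1 : ℂ) := hopen.mem_nhds (by norm_num)
  have hd1 := (differentiableOn_dslope hmem).2 hd
  have hd2 := (differentiableOn_dslope hmem).2 hd1
  have h2ne : ∀ s : ℂ, s.re ≤ 3 / 2 → (2 - s : ℂ) ≠ 0 := by
    intro s hs h
    have := congrArg re h
    simp at this
    linarith
  set Φ : ℂ → ℂ := fun s => dslope (dslope (logDeriv entireXi) 1) 1 s - c / (2 - s) with hΦ
  have hΦd : DifferentiableOn ℂ Φ {s | σ ≤ s.re ∧ s.re ≤ 3 / 2} := by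
    refine DifferentiableOn.fun_sub (hd2.mono fun s hs => h1.trans_le hs.1) ?_
    exact DifferentiableOn.fun_div (differentiableOn_const _) (by fun_prop)
      fun s hs => h2ne s hs.2
  have heq : ∀ s : ℂ, s ≠ 1 → s.re ≤ 3 / 2 → Φ s = xiKernel s := by
    intro s hs hs2
    have h3 : s - 1 ≠ 0 := sub_ne_zero.2 hs
    have h4 := h2ne s hs2
    rw [hΦ, xiKernel]
    simp only
    rw [dslope_of_ne _ hs, slope_def_field, dslope_of_ne _ hs, slope_def_field, dslope_same,
      logDeriv_entireXi_one, ← hc]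
    field_simp
    ring
  obtain ⟨C1, hC1, hCb1⟩ := exists_normWeight_neg_bound_mul 1 1 (δ := 1 - σ) (by linarith)
  obtain ⟨C2, hC2, hCb2⟩ := exists_normWeight_neg_bound_mul 1 2 (δ := 1 - σ) (by linarith)
  obtain ⟨K', hK'⟩ := exists_bound_of_bound_away (S := {s : ℂ | σ ≤ s.re ∧ s.re ≤ 3 / 2})
    ((isClosed_le continuous_const continuous_re).inter
      (isClosed_le continuous_re continuous_const)) hΦd.continuousOn 1 (δ := 1 - σ)
    (K := (K + ‖(xiConst : ℂ)‖) * C1 + ‖c‖ * C2) (q := -(3 / 4)) (by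
      intro s hs hs1
      have hne : s ≠ 1 := by
        rintro rfl
        simp at hs1
        linarith
      have hW := one_le_normWeight (p := 1 / 4) (by norm_num) s
      have h4 := hG s (by simpa using hs.1)
      have h5 := hCb1 s hs1 hs1
      have h7 := hCb2 s hs1 (by
        have h8 : 1 / 2 ≤ ‖s - 2‖ := by
          refine le_trans ?_ ((neg_le_abs _).trans (abs_re_le_norm _))
          have := hs.2
          simp only [sub_re, re_ofNat]
          linarith
        linarith)
      have h6 : ‖logDeriv entireXi s - xiConst‖
          ≤ (K + ‖(xiConst : ℂ)‖) * normWeight (1 / 4) s := by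
        refine (norm_sub_le _ _).trans ?_
        nlinarith [norm_nonneg (xiConst : ℂ)]
      have hp := normWeight_pos (1 / 4) s
      have hq := normWeight_pos (-1) s
      have hsum : normWeight (-(3 / 4)) s = normWeight (1 / 4) s * normWeight (-1) s := by
        rw [← normWeight_add]
        norm_num
      rw [heq s hne hs.2, xiKernel, ← hc]
      refine (norm_sub_le _ _).trans ?_
      rw [add_mul]
      refine add_le_add ?_ ?_
      · rw [norm_div, norm_pow, sq, div_eq_mul_inv, hsum]
        calc _ ≤ (K + ‖(xiConst : ℂ)‖) * normWeight (1 / 4) s * (C1 * normWeight (-1) s) := by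
              gcongr
          _ = _ := by ring
      · rw [norm_div, norm_mul, norm_sub_rev 2 s, div_eq_mul_inv, hsum]
        calc _ ≤ ‖c‖ * (C2 * normWeight (-1) s) := by gcongr
          _ = ‖c‖ * C2 * (1 * normWeight (-1) s) := by ring
          _ ≤ _ := by gcongr)
  exact ⟨Φ, K', hΦd, heq, hK'⟩

theorem integral_cpow_div_mul_eq_zero {σ : ℝ} (h2 : σ < 1) {x : ℝ} (hx : 1 ≤ x) {q : ℂ}
    (hq : 1 ≤ q.re) :
    Integrable (fun y : ℝ => (x : ℂ) ^ (σ + y * I - 1 : ℂ) /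
      ((σ + y * I - 1) * (σ + y * I - q))) ∧
    ∫ y : ℝ, (x : ℂ) ^ (σ + y * I - 1 : ℂ) / ((σ + y * I - 1) * (σ + y * I - q)) = 0 := by
  have hx0 : (0 : ℝ) < x := by linarith
  have hxc : (x : ℂ) ≠ 0 := ofReal_ne_zero.2 hx0.ne'
  obtain ⟨C, hC, hCb⟩ := exists_normWeight_neg_bound_mul (-1) (-q) (δ := 1 - σ) (by linarith)
  set Φ : ℂ → ℂ := fun s => (x : ℂ) ^ (-s - 1) / ((-s - 1) * (-s - q)) with hΦ
  have hge : ∀ p : ℂ, 1 ≤ p.re → ∀ s : ℂ, -σ ≤ s.re → 1 - σ ≤ ‖s - -p‖ := by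
    intro p hp s hs
    refine le_trans ?_ ((le_abs_self _).trans (abs_re_le_norm _))
    simp only [sub_re, neg_re]
    linarith
  have hne : ∀ p : ℂ, 1 ≤ p.re → ∀ s : ℂ, -σ ≤ s.re → -s - p ≠ 0 := by
    intro p hp s hs h
    have h3 := hge p hp s hs
    rw [show s - -p = -(-s - p) by ring, h, neg_zero, norm_zero] at h3
    linarith
  have hd : DifferentiableOn ℂ Φ {s | -σ ≤ s.re} := by
    refine DifferentiableOn.fun_div (DifferentiableOn.const_cpow (by fun_prop) (Or.inl hxc))
      (by fun_prop) fun s hs => mul_ne_zero (hne 1 (by simp) s hs) (hne q hq s hs)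
  have hb : ∀ s : ℂ, -σ ≤ s.re → ‖Φ s‖ ≤ C * normWeight (-1) s := by
    intro s hs
    have h5 := hCb s (hge 1 (by simp) s hs) (hge q hq s hs)
    rw [show s - -1 = -(-s - 1) by ring, show s - -q = -(-s - q) by ring, norm_neg, norm_neg] at h5
    have h6 : ‖(x : ℂ) ^ (-s - 1)‖ ≤ 1 := by
      rw [norm_cpow_eq_rpow_re_of_pos hx0]
      refine Real.rpow_le_one_of_one_le_of_nonpos hx ?_
      simp only [sub_re, neg_re, one_re]
      linarith
    rw [hΦ]
    simp only
    rw [norm_div, norm_mul, div_eq_mul_inv]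
    exact (mul_le_of_le_one_left (by positivity) h6).trans h5
  have hi := integrable_vertical_of_norm_le (a := -σ) (K := C) (q := 1) (Φ := Φ) (by norm_num)
    (hd.continuousOn.mono fun s hs => le_of_eq (Eq.symm hs)) (fun y =>
      (hb _ (by simp)).trans (mul_le_mul_of_nonneg_left
        (normWeight_vertical_le' (by norm_num) _ y) hC))
  have hz := integral_vertical_eq_zero (a := -σ) (p := 1) (by norm_num) hd hb
  have hneg : ∀ y : ℝ, Φ ((-σ : ℝ) + (-y : ℝ) * I) = (x : ℂ) ^ (σ + y * I - 1 : ℂ) /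
      ((σ + y * I - 1) * (σ + y * I - q)) := by
    intro y
    rw [hΦ]
    simp only
    rw [show -(((-σ : ℝ) : ℂ) + (-y : ℝ) * I) = σ + y * I by push_cast; ring]
  constructor
  · refine (hi.comp_neg).congr (Eventually.of_forall fun y => hneg y)
  · rw [← hz, ← integral_neg_eq_self (fun y : ℝ => Φ ((-σ : ℝ) + y * I))]
    exact integral_congr_ae (Eventually.of_forall fun y => (hneg y).symm)

/-- Shifting the inverse Mellin integral of `xiKernel` towards the critical line. -/
theorem integral_xiKernel_mul_cpow (hRH : RiemannHypothesis) {σ : ℝ} (h1 : 1 / 2 < σ)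
    (h2 : σ < 1) {x : ℝ} (hx : 1 ≤ x) :
    ∫ y : ℝ, xiKernel ((3 / 2 : ℝ) + y * I) * (x : ℂ) ^ (((3 / 2 : ℝ) : ℂ) + y * I - 1) =
    ∫ y : ℝ, logDeriv entireXi (σ + y * I) * (x : ℂ) ^ (σ + y * I - 1 : ℂ) /
      (σ + y * I - 1) ^ 2 := by
  have hx0 : (0 : ℝ) < x := by linarith
  have hxc : (x : ℂ) ≠ 0 := ofReal_ne_zero.2 hx0.ne'
  obtain ⟨Φ, K, hd, heq, hb⟩ := exists_differentiableOn_eq_xiKernel hRH h1 h2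
  have hK : 0 ≤ K := by
    have h3 := (norm_nonneg _).trans (hb σ (by simp; linarith))
    exact nonneg_of_mul_nonneg_left h3 (normWeight_pos _ _)
  have hshift := integral_vertical_eq_of_differentiableOn (a := σ) (b := 3 / 2) (q := 3 / 4)
    (K := x ^ (1 / 2 : ℝ) * K) (Φ := fun s => (x : ℂ) ^ (s - 1) * Φ s) (by linarith) (by norm_num)
    (DifferentiableOn.fun_mul (DifferentiableOn.const_cpow (by fun_prop) (Or.inl hxc)) hd) (by
      intro s hs1 hs2
      have h6 : ‖(x : ℂ) ^ (s - 1)‖ ≤ x ^ (1 / 2 : ℝ) := by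
        rw [norm_cpow_eq_rpow_re_of_pos hx0]
        refine Real.rpow_le_rpow_of_exponent_le hx ?_
        simp only [sub_re, one_re]
        linarith
      have h7 := normWeight_vertical_le' (q := 3 / 4) (by norm_num) s.re s.im
      rw [re_add_im] at h7
      rw [norm_mul, mul_assoc]
      gcongr
      exact (hb s ⟨hs1, hs2⟩).trans (by gcongr))
  have hne : ∀ a y : ℝ, a ≠ 1 → (a + y * I : ℂ) ≠ 1 := by
    intro a y ha h
    have := congrArg re h
    simp at this
    exact ha this
  have hl : ∀ y : ℝ, xiKernel ((3 / 2 : ℝ) + y * I) * (x : ℂ) ^ (((3 / 2 : ℝ) : ℂ) + y * I - 1)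
      = (x : ℂ) ^ (((3 / 2 : ℝ) : ℂ) + y * I - 1) * Φ ((3 / 2 : ℝ) + y * I) := by
    intro y
    rw [heq _ (hne _ _ (by norm_num)) (by simp), mul_comm]
  simp_rw [hl]
  rw [← hshift]
  obtain ⟨hi1, hz1⟩ := integral_cpow_div_mul_eq_zero h2 hx (q := 1) (by simp)
  obtain ⟨hi2, hz2⟩ := integral_cpow_div_mul_eq_zero h2 hx (q := 2) (by simp)
  have hi0 := integrable_logDeriv_mul_cpow hRH h1 h2 hx0
  have hr : ∀ y : ℝ, (x : ℂ) ^ (σ + y * I - 1 : ℂ) * Φ (σ + y * I) =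
      logDeriv entireXi (σ + y * I) * (x : ℂ) ^ (σ + y * I - 1 : ℂ) / (σ + y * I - 1) ^ 2 -
      xiConst * ((x : ℂ) ^ (σ + y * I - 1 : ℂ) / ((σ + y * I - 1) * (σ + y * I - 1))) +
      deriv (logDeriv entireXi) 1 *
        ((x : ℂ) ^ (σ + y * I - 1 : ℂ) / ((σ + y * I - 1) * (σ + y * I - 2))) := by
    intro y
    rw [heq _ (hne _ _ h2.ne) (by simp; linarith), xiKernel]
    rw [show (2 : ℂ) - (σ + y * I) = -(σ + y * I - 2) by ring, mul_neg, div_neg]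
    ring
  simp_rw [hr]
  have hi3 := hi1.const_mul (xiConst : ℂ)
  rw [integral_add ?_ (hi2.const_mul _), integral_sub hi0 hi3, integral_const_mul,
    integral_const_mul, hz1, hz2]
  · simp
  · exact hi0.sub hi3

theorem integrable_xiKernel (hRH : RiemannHypothesis) :
    Integrable fun y : ℝ => xiKernel ((3 / 2 : ℝ) + y * I) := by
  obtain ⟨Φ, K, hd, heq, hb⟩ := exists_differentiableOn_eq_xiKernel hRH (σ := 3 / 4)
    (by norm_num) (by norm_num)
  have hK : 0 ≤ K := by
    have h3 := (norm_nonneg _).trans (hb 1 (by norm_num))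
    exact nonneg_of_mul_nonneg_left h3 (normWeight_pos _ _)
  have hi := integrable_vertical_of_norm_le (a := 3 / 2) (K := K) (q := 3 / 4) (Φ := Φ)
    (by norm_num) (hd.continuousOn.mono fun s hs => by
      have h3 : s.re = 3 / 2 := hs
      constructor <;> linarith) (fun y => (hb _ (by norm_num)).trans (mul_le_mul_of_nonneg_left
        (normWeight_vertical_le' (by norm_num) _ y) hK))
  refine hi.congr (Eventually.of_forall fun y => heq _ ?_ (by norm_num))
  intro h
  have := congrArg re h
  norm_num at this

theorem HasMellin.congr_of_pos {f g : ℝ → ℂ} {s m : ℂ} (h : HasMellin f s m)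
    (hfg : ∀ u, 0 < u → f u = g u) : HasMellin g s m := by
  have h1 : Set.EqOn (fun t : ℝ => (t : ℂ) ^ (s - 1) • f t) (fun t : ℝ => (t : ℂ) ^ (s - 1) • g t)
      (Set.Ioi 0) := fun u hu => by simp only [hfg u hu]
  refine ⟨(integrableOn_congr_fun h1 measurableSet_Ioi).1 h.1, ?_⟩
  rw [← h.2, mellin, mellin, setIntegral_congr_fun measurableSet_Ioi h1]

theorem HasMellin.const_mul {f : ℝ → ℂ} {s m : ℂ} (h : HasMellin f s m) (c : ℂ) :
    HasMellin (fun u => c * f u) s (c * m) := by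
  have := hasMellin_const_smul h.1 c
  rwa [h.2] at this

theorem HasMellin.add {f g : ℝ → ℂ} {s m n : ℂ} (hf : HasMellin f s m) (hg : HasMellin g s n) :
    HasMellin (fun u => f u + g u) s (m + n) := by
  have := hasMellin_add hf.1 hg.1
  rwa [hf.2, hg.2] at this

theorem HasMellin.sub {f g : ℝ → ℂ} {s m n : ℂ} (hf : HasMellin f s m) (hg : HasMellin g s n) :
    HasMellin (fun u => f u - g u) s (m - n) := by
  have := hasMellin_sub hf.1 hg.1
  rwa [hf.2, hg.2] at this

theorem hasMellin_of_hasSum {f : ℕ → ℝ → ℂ} {F : ℝ → ℂ} {m : ℕ → ℂ} {s M : ℂ}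
    (hf : ∀ i, HasMellin (f i) s (m i)) (hF : ∀ u, 0 < u → HasSum (fun i => f i u) (F u))
    (hn : Summable fun i => ∫ u in Set.Ioi (0 : ℝ), ‖(u : ℂ) ^ (s - 1) • f i u‖)
    (hM : HasSum m M) : HasMellin F s M := by
  have hsum : ∀ u : ℝ, 0 < u → HasSum (fun i => (u : ℂ) ^ (s - 1) • f i u) ((u : ℂ) ^ (s - 1) • F u) :=
    fun u hu => (hF u hu).const_smul _
  have h1 := hasSum_integral_of_summable_integral_norm (μ := volume.restrict (Set.Ioi (0 : ℝ)))
    (F := fun i u => (u : ℂ) ^ (s - 1) • f i u) (fun i => (hf i).1) hn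
  have hae : ∀ᵐ u : ℝ ∂(volume.restrict (Set.Ioi (0 : ℝ))),
      ∑' i, (u : ℂ) ^ (s - 1) • f i u = (u : ℂ) ^ (s - 1) • F u := by
    refine (ae_restrict_iff' measurableSet_Ioi).2 (Eventually.of_forall fun u hu => ?_)
    exact (hsum u hu).tsum_eq
  have h_integ : (fun i => ∫ u in Set.Ioi (0 : ℝ), (u : ℂ) ^ (s - 1) • f i u) = m :=
    funext fun i => (hf i).2
  rw [h_integ, integral_congr_ae hae] at h1
  refine ⟨⟨?_, ?_⟩, h1.unique hM⟩
  · refine aestronglyMeasurable_of_tendsto_ae atTop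
      (f := fun (n : ℕ) (u : ℝ) => ∑ i ∈ Finset.range n, (u : ℂ) ^ (s - 1) • f i u) (fun n => ?_) ?_
    · exact Finset.aestronglyMeasurable_fun_sum _ fun i _ => (hf i).1.1
    · refine (ae_restrict_iff' measurableSet_Ioi).2 (Eventually.of_forall fun u hu => ?_)
      exact (hsum u hu).tendsto_sum_nat
  · have h2 : ∑' i, ∫⁻ u in Set.Ioi (0 : ℝ), ‖(u : ℂ) ^ (s - 1) • f i u‖ₑ ≠ ⊤ := by
      have h3 : ∀ i, ∫⁻ u in Set.Ioi (0 : ℝ), ‖(u : ℂ) ^ (s - 1) • f i u‖ₑ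
          = ENNReal.ofReal (∫ u in Set.Ioi (0 : ℝ), ‖(u : ℂ) ^ (s - 1) • f i u‖) := fun i =>
        (ofReal_integral_norm_eq_lintegral_enorm (hf i).1).symm
      simp_rw [h3]
      exact hn.tsum_ofReal_ne_top
    refine lt_of_le_of_lt ?_ h2.lt_top
    rw [← lintegral_tsum fun i => (hf i).1.1.enorm]
    refine lintegral_mono_ae ((ae_restrict_iff' measurableSet_Ioi).2
      (Eventually.of_forall fun u hu => ?_))
    simp only
    rw [← (hsum u hu).tsum_eq]
    exact enorm_tsum_le_tsum_enorm

theorem ofReal_integral_norm_cpow_smul_eq_mellin {f : ℝ → ℂ} {s : ℂ}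
    (hf : ∀ u, 0 < u → f u = ‖f u‖) :
    ((∫ u in Set.Ioi (0 : ℝ), ‖(u : ℂ) ^ (s - 1) • f u‖ : ℝ) : ℂ) = mellin f s.re := by
  rw [← integral_complex_ofReal, mellin]
  refine setIntegral_congr_fun measurableSet_Ioi fun u hu => ?_
  have hu' : 0 < u := hu
  simp only [smul_eq_mul]
  rw [norm_mul, norm_cpow_eq_rpow_re_of_pos hu', ofReal_mul, ← hf u hu', ofReal_cpow hu'.le]
  simp

/-- Mellin series with nonnegative terms. -/
theorem hasMellin_of_hasSum_of_nonneg {f : ℕ → ℝ → ℂ} {F : ℝ → ℂ} {m : ℕ → ℂ → ℂ} {s M : ℂ}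
    (hs : 0 < s.re) (hf : ∀ i, ∀ z : ℂ, 0 < z.re → HasMellin (f i) z (m i z))
    (hnn : ∀ i u, 0 < u → f i u = ‖f i u‖)
    (hF : ∀ u, 0 < u → HasSum (fun i => f i u) (F u))
    (hn : Summable fun i => m i s.re) (hM : HasSum (fun i => m i s) M) : HasMellin F s M := by
  refine hasMellin_of_hasSum (fun i => hf i s hs) hF ?_ hM
  refine summable_ofReal.1 (hn.congr fun i => ?_)
  rw [ofReal_integral_norm_cpow_smul_eq_mellin (hnn i), (hf i s.re (by simpa using hs)).2]

theorem hasMellin_log_smul {f : ℝ → ℂ} {F : ℂ → ℂ} {F' s : ℂ}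
    (hf : ∀ z : ℂ, 0 < z.re → HasMellin f z (F z)) (ht : ∀ u, 1 < u → f u = 0)
    (h0 : ∀ b : ℝ, 0 < b → f =O[𝓝[>] 0] (fun u : ℝ => u ^ (-b))) (hs : 0 < s.re)
    (hF : HasDerivAt F F' s) : HasMellin (fun u => Real.log u • f u) s F' := by
  have hloc : LocallyIntegrableOn f (Set.Ioi 0) := by
    have := (hf 1 (by simp)).1
    simp only [MellinConvergent, sub_self, cpow_zero, one_smul] at this
    exact this.locallyIntegrableOn
  have htop : f =O[atTop] (fun u : ℝ => u ^ (-(s.re + 1))) := by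
    refine (Asymptotics.isBigO_zero _ _).congr' ?_ EventuallyEq.rfl
    filter_upwards [eventually_gt_atTop 1] with u hu
    rw [ht u hu]
  obtain ⟨h1, h2⟩ := mellin_hasDerivAt_of_isBigO_rpow hloc htop (by linarith)
    (h0 (s.re / 2) (by linarith)) (by linarith)
  refine ⟨h1, h2.unique (hF.congr_of_eventuallyEq ?_)⟩
  filter_upwards [(isOpen_lt continuous_const continuous_re).mem_nhds hs] with z hz
  exact (hf z hz).2

theorem indicator_one_isBigO {b : ℝ} (hb : 0 < b) :
    (Set.indicator (Set.Ioc 0 1) fun _ => 1 : ℝ → ℂ) =O[𝓝[>] 0] (fun u : ℝ => u ^ (-b)) := by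
  refine Asymptotics.IsBigO.of_bound 1 ?_
  filter_upwards [Ioo_mem_nhdsGT (zero_lt_one' ℝ)] with u hu
  rw [Set.indicator_of_mem (show u ∈ Set.Ioc (0 : ℝ) 1 from ⟨hu.1, hu.2.le⟩), norm_one, one_mul]
  refine le_trans ?_ (le_abs_self _)
  rw [Real.rpow_neg hu.1.le]
  exact (one_le_inv₀ (Real.rpow_pos_of_pos hu.1 _)).2 (Real.rpow_le_one hu.1.le hu.2.le hb.le)

theorem indicator_isBigO_of_log_smul {f : ℝ → ℂ}
    (h0 : ∀ b : ℝ, 0 < b → f =O[𝓝[>] 0] (fun u : ℝ => u ^ (-b))) (b : ℝ) (hb : 0 < b) :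
    (fun u => Real.log u • f u) =O[𝓝[>] 0] (fun u : ℝ => u ^ (-b)) :=
  isBigO_rpow_zero_log_smul (half_lt_self hb) (h0 (b / 2) (by linarith))

theorem posLog_inv_of_le_one {u : ℝ} (hu : 0 < u) (h1 : u ≤ 1) :
    Real.posLog u⁻¹ = -Real.log u := by
  rw [Real.posLog_apply, Real.log_inv, max_eq_right]
  have := Real.log_nonpos hu.le h1
  linarith

theorem posLog_inv_of_one_lt {u : ℝ} (h1 : 1 < u) : Real.posLog u⁻¹ = 0 := by
  rw [Real.posLog_apply, Real.log_inv, max_eq_left]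
  have := Real.log_pos h1
  linarith

theorem hasMellin_posLog_inv {s : ℂ} (hs : 0 < s.re) :
    HasMellin (fun u => (Real.posLog u⁻¹ : ℂ)) s (1 / s ^ 2) := by
  have hs0 : s ≠ 0 := by rintro rfl; simp at hs
  have h := hasMellin_log_smul (F := fun z => 1 / z) (F' := -(1 / s ^ 2))
    (fun z hz => hasMellin_one_Ioc hz) (fun u hu => Set.indicator_of_notMem (fun h => by
      linarith [h.2]) _) (fun b hb => indicator_one_isBigO hb) hs (by
      simpa using! hasDerivAt_inv hs0)
  refine HasMellin.congr_of_pos (by simpa using h.const_mul (-1)) fun u hu => ?_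
  rcases le_or_gt u 1 with h1 | h1
  · rw [posLog_inv_of_le_one hu h1, Set.indicator_of_mem (show u ∈ Set.Ioc (0 : ℝ) 1 from ⟨hu, h1⟩)]
    simp
  · rw [posLog_inv_of_one_lt h1, Set.indicator_of_notMem fun h => by linarith [h.2]]
    simp

theorem hasMellin_posLog_inv_sq {s : ℂ} (hs : 0 < s.re) :
    HasMellin (fun u => (Real.posLog u⁻¹ : ℂ) ^ 2) s (2 / s ^ 3) := by
  have hne : ∀ z : ℂ, 0 < z.re → z ≠ 0 := by rintro z hz rfl; simp at hz
  have h1 : ∀ z : ℂ, 0 < z.re → HasMellin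
      (fun u => Real.log u • (Set.indicator (Set.Ioc 0 1) fun _ => 1 : ℝ → ℂ) u) z
      (-(1 / z ^ 2)) := fun z hz => hasMellin_log_smul (F := fun z => 1 / z)
    (fun z hz => hasMellin_one_Ioc hz) (fun u hu => Set.indicator_of_notMem (fun h => by
      linarith [h.2]) _) (fun b hb => indicator_one_isBigO hb) hz (by
      simpa using! hasDerivAt_inv (hne z hz))
  have h := hasMellin_log_smul h1 (F' := 2 / s ^ 3) (fun u hu => by
      rw [Set.indicator_of_notMem (fun h => by linarith [h.2]), smul_zero])
    (indicator_isBigO_of_log_smul fun b hb => indicator_one_isBigO hb) hs (by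
      have h3 := ((hasDerivAt_pow 2 s).fun_inv (pow_ne_zero 2 (hne s hs))).fun_neg
      have h4 : -(-((2 : ℕ) * s ^ (2 - 1)) / (s ^ 2) ^ 2) = 2 / s ^ 3 := by
        have := hne s hs
        push_cast
        field_simp
      rw [← h4]
      simpa only [one_div] using! h3)
  refine h.congr_of_pos fun u hu => ?_
  rcases le_or_gt u 1 with h1 | h1
  · rw [posLog_inv_of_le_one hu h1, Set.indicator_of_mem (show u ∈ Set.Ioc (0 : ℝ) 1 from ⟨hu, h1⟩)]
    push_cast
    simp only [real_smul]
    ring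
  · rw [posLog_inv_of_one_lt h1, Set.indicator_of_notMem fun h => by linarith [h.2]]
    simp

theorem hasMellin_one_sub_min_pow {a : ℕ} {s : ℂ} (hs : 0 < s.re) :
    HasMellin (fun u : ℝ => 1 - ((min u 1 : ℝ) : ℂ) ^ a) s (1 / s - 1 / (s + a)) := by
  have h1 := hasMellin_one_Ioc hs
  have h2 := hasMellin_cpow_Ioc (a : ℂ) (s := s) (by simp; positivity)
  refine (h1.sub h2).congr_of_pos fun u hu => ?_
  rcases le_or_gt u 1 with h3 | h3
  · rw [Set.indicator_of_mem (show u ∈ Set.Ioc (0 : ℝ) 1 from ⟨hu, h3⟩),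
      Set.indicator_of_mem (show u ∈ Set.Ioc (0 : ℝ) 1 from ⟨hu, h3⟩), min_eq_left h3]
    simp
  · rw [Set.indicator_of_notMem fun h => by linarith [h.2],
      Set.indicator_of_notMem fun h => by linarith [h.2], min_eq_right h3.le]
    simp

theorem hasMellin_min_one_inv {s : ℂ} (hs : 0 < s.re) (hs1 : s.re < 1) :
    HasMellin (fun u : ℝ => ((min 1 u⁻¹ : ℝ) : ℂ)) s (1 / (s * (1 - s))) := by
  have hs0 : s ≠ 0 := by rintro rfl; simp at hs
  have hs2 : 1 - s ≠ 0 := by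
    intro h
    have := congrArg re h
    simp at this
    linarith
  have h1 := hasMellin_one_Ioc hs
  have h2 : HasMellin (Set.indicator (Set.Ioi 1) fun u : ℝ => (u : ℂ)⁻¹) s (1 / (1 - s)) := by
    have heq : ∀ u : ℝ, (u : ℂ) ^ (s - 1) • (Set.indicator (Set.Ioi 1) fun u : ℝ => (u : ℂ)⁻¹) u
        = Set.indicator (Set.Ioi 1) (fun u : ℝ => (u : ℂ) ^ (s - 2)) u := by
      intro u
      by_cases hu : 1 < u
      · rw [Set.indicator_of_mem (by exact hu), Set.indicator_of_mem (by exact hu), smul_eq_mul,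
          ← cpow_neg_one, ← cpow_add _ _ (ofReal_ne_zero.2 (by linarith))]
        congr 1
        ring
      · rw [Set.indicator_of_notMem (by exact hu), Set.indicator_of_notMem (by exact hu), smul_zero]
    have hsub : Set.Ioi (0 : ℝ) ∩ Set.Ioi 1 = Set.Ioi 1 := by
      ext u
      simp only [Set.mem_inter_iff, Set.mem_Ioi]
      constructor
      · exact fun h => h.2
      · exact fun h => ⟨by linarith, h⟩
    have hre : (s - 2).re < -1 := by
      simp only [sub_re, re_ofNat]
      linarith
    constructor
    · rw [MellinConvergent]
      simp_rw [heq]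
      rw [IntegrableOn, integrable_indicator_iff measurableSet_Ioi, IntegrableOn,
        Measure.restrict_restrict measurableSet_Ioi, Set.inter_comm, hsub]
      exact integrableOn_Ioi_cpow_of_lt hre one_pos
    · rw [mellin]
      simp_rw [heq]
      rw [setIntegral_indicator measurableSet_Ioi, hsub, integral_Ioi_cpow_of_lt hre one_pos,
        ofReal_one, one_cpow, show s - 2 + 1 = -(1 - s) by ring, neg_div_neg_eq]
  have h3 := h1.add h2
  rw [show 1 / s + 1 / (1 - s) = 1 / (s * (1 - s)) by field_simp; ring] at h3
  refine h3.congr_of_pos fun u hu => ?_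
  rcases le_or_gt u 1 with h3 | h3
  · rw [Set.indicator_of_mem (show u ∈ Set.Ioc (0 : ℝ) 1 from ⟨hu, h3⟩),
      Set.indicator_of_notMem fun h => by linarith [Set.mem_Ioi.1 h],
      min_eq_left ((one_le_inv₀ hu).2 h3)]
    simp
  · rw [Set.indicator_of_notMem fun h => by linarith [h.2], Set.indicator_of_mem (by exact h3),
      min_eq_right (inv_le_one_of_one_le₀ h3.le)]
    simp

theorem HasSum.of_eq {f g : ℕ → ℂ} {a : ℂ} (h : HasSum g a) (hfg : ∀ k, f k = g k) :
    HasSum f a :=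
  (funext hfg : f = g) ▸ h

theorem hasSum_gammaLogDeriv_sub {w : ℂ} (hw : 0 < w.re) :
    HasSum (fun k : ℕ => w / ((2 * k + 3 : ℕ) * (w + (2 * k + 3 : ℕ))))
      (gammaLogDeriv (1 + w) - gammaLogDeriv 1) := by
  have h1 := hasSum_digamma (w := (1 + w) / 2) (by simp; linarith)
  have h2 := hasSum_digamma (w := 1 / 2) (by norm_num)
  have h3 := (h1.sub h2).mul_left (1 / 2)
  rw [gammaLogDeriv, gammaLogDeriv]
  rw [show ∀ a b c d : ℂ, a + b / 2 - (a + c / 2) = 1 / 2 * (b - d - (c - d)) from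
    fun a b c d => by ring]
  refine h3.of_eq fun k => ?_
  have ha : (2 * (k : ℂ) + 3) ≠ 0 := by
    have : (0 : ℝ) < 2 * k + 3 := by positivity
    exact_mod_cast this.ne'
  have hb : (2 * (k : ℂ) + 3 + w) ≠ 0 := by
    intro h
    have := congrArg re h
    simp at this
    have hk : (0 : ℝ) ≤ k := by positivity
    linarith
  have e1 : ((k : ℂ) + 1 + (1 + w) / 2)⁻¹ = 2 * (2 * (k : ℂ) + 3 + w)⁻¹ := by
    rw [show (k : ℂ) + 1 + (1 + w) / 2 = (2 * (k : ℂ) + 3 + w) / 2 by ring, inv_div]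
    rfl
  have e2 : ((k : ℂ) + 1 + 1 / 2)⁻¹ = 2 * (2 * (k : ℂ) + 3)⁻¹ := by
    rw [show (k : ℂ) + 1 + 1 / 2 = (2 * (k : ℂ) + 3) / 2 by ring, inv_div]
    rfl
  rw [e1, e2]
  push_cast
  rw [add_comm w]
  field_simp
  ring

theorem logDeriv_entireXi_one_add {w : ℂ} (hw : 0 < w.re) :
    logDeriv entireXi (1 + w) - xiConst =
      1 / w - LSeries (fun n => (ArithmeticFunction.vonMangoldt n : ℂ)) (1 + w)
      - Real.eulerMascheroniConstant + (gammaLogDeriv (1 + w) - gammaLogDeriv 1) := by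
  have hz : riemannZeta₁ (1 + w) ≠ 0 := by
    rw [riemannZeta₁_eq (by
      intro h
      have := congrArg re h
      simp at this
      linarith)]
    refine mul_ne_zero ?_ (riemannZeta_ne_zero_of_one_le_re (by simp; linarith))
    intro h
    have := congrArg re h
    simp at this
    linarith
  have h1 : riemannZeta₁ 1 ≠ 0 := by simp [riemannZeta₁_one]
  rw [← logDeriv_entireXi_one, logDeriv_entireXi_eq (by simp; linarith) hz,
    logDeriv_entireXi_eq (by simp) h1, logDeriv_riemannZeta₁_eq (by simp; linarith),
    logDeriv_apply, riemannZeta₁_one, deriv_riemannZeta₁_one, div_one]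
  rw [show (1 + w - 1) = w by ring]
  ring

/-- `∑_{n ≤ x} Λ(n)/n log(x/n)`. -/
noncomputable def vonMangoldtLogSum (x : ℝ) : ℝ :=
  ∑ n ∈ Finset.Icc 1 ⌊x⌋₊, ArithmeticFunction.vonMangoldt n / n * Real.log (x / n)

theorem posLog_div_natCast_of_floor_lt {x : ℝ} (hx : 0 < x) {n : ℕ} (hn : ⌊x⌋₊ < n) :
    Real.posLog (x / n) = 0 := by
  have h1 : x < n := (Nat.floor_lt hx.le).1 hn
  have h2 : (0 : ℝ) < n := hx.trans h1
  rw [Real.posLog_eq_zero_iff, abs_of_pos (by positivity)]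
  exact ((div_lt_one h2).2 h1).le

theorem vonMangoldtLogSum_eq_sum {x : ℝ} (hx : 0 < x) {N : ℕ} (hN : ⌊x⌋₊ ≤ N) :
    vonMangoldtLogSum x =
      ∑ n ∈ Finset.Icc 1 N, ArithmeticFunction.vonMangoldt n / n * Real.posLog (x / n) := by
  rw [vonMangoldtLogSum, ← Finset.sum_subset (Finset.Icc_subset_Icc_right hN)]
  · refine Finset.sum_congr rfl fun n hn => ?_
    obtain ⟨h1, h2⟩ := Finset.mem_Icc.1 hn
    have h3 : (n : ℝ) ≤ x := (Nat.le_floor_iff hx.le).1 h2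
    have h4 : (0 : ℝ) < n := by exact_mod_cast h1
    rw [Real.posLog_eq_log]
    rw [abs_of_pos (by positivity)]
    exact (one_le_div h4).2 h3
  · intro n hn hn'
    rw [posLog_div_natCast_of_floor_lt hx, mul_zero]
    by_contra h
    exact hn' (Finset.mem_Icc.2 ⟨(Finset.mem_Icc.1 hn).1, not_lt.1 h⟩)

theorem hasSum_vonMangoldtLogSum {x : ℝ} (hx : 0 < x) :
    HasSum (fun n : ℕ => ArithmeticFunction.vonMangoldt n / n * Real.posLog (x / n))
      (vonMangoldtLogSum x) := by
  rw [vonMangoldtLogSum_eq_sum hx le_rfl]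
  refine hasSum_sum_of_ne_finset_zero fun n hn => ?_
  rcases Nat.eq_zero_or_pos n with rfl | h1
  · simp
  · rw [posLog_div_natCast_of_floor_lt hx, mul_zero]
    by_contra h
    exact hn (Finset.mem_Icc.2 ⟨h1, not_lt.1 h⟩)

theorem continuousOn_vonMangoldtLogSum : ContinuousOn vonMangoldtLogSum (Set.Ioi 0) := by
  intro x hx
  refine ContinuousAt.continuousWithinAt ?_
  have h1 : ∀ᶠ y in 𝓝 x, vonMangoldtLogSum y = ∑ n ∈ Finset.Icc 1 ⌊x + 1⌋₊,
      ArithmeticFunction.vonMangoldt n / n * Real.posLog (y / n) := by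
    filter_upwards [Ioo_mem_nhds (show 0 < x from hx) (lt_add_one x)] with y hy
    exact vonMangoldtLogSum_eq_sum hy.1 (Nat.floor_mono hy.2.le)
  refine ContinuousAt.congr ?_ (EventuallyEq.symm h1)
  refine Continuous.continuousAt ?_
  refine continuous_finsetSum _ fun n _ => ?_
  exact continuous_const.mul (Real.continuous_posLog.comp (continuous_id.div_const _))

theorem hasMellin_vonMangoldtLogSum {s : ℂ} (hs : 0 < s.re) :
    HasMellin (fun u : ℝ => (vonMangoldtLogSum u⁻¹ : ℂ)) s
      (LSeries (fun n => (ArithmeticFunction.vonMangoldt n : ℂ)) (1 + s) / s ^ 2) := by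
  have hL : ∀ z : ℂ, 0 < z.re → HasSum (fun n : ℕ =>
      (ArithmeticFunction.vonMangoldt n / n : ℂ) * ((n : ℂ) ^ (-z) * (1 / z ^ 2)))
      (LSeries (fun n => (ArithmeticFunction.vonMangoldt n : ℂ)) (1 + z) / z ^ 2) := by
    intro z hz
    have h1 := (ArithmeticFunction.LSeriesSummable_vonMangoldt (s := 1 + z)
      (by simpa using hz)).hasSum.div_const (z ^ 2)
    refine h1.of_eq fun n => ?_
    rcases Nat.eq_zero_or_pos n with rfl | hn
    · simp
    · have hn0 : (n : ℂ) ≠ 0 := by exact_mod_cast hn.ne'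
      rw [LSeries.term_of_ne_zero hn.ne', cpow_add _ _ hn0, cpow_one, cpow_neg]
      ring
  refine hasMellin_of_hasSum_of_nonneg (f := fun n u =>
      ((ArithmeticFunction.vonMangoldt n / n * Real.posLog (u⁻¹ / n) : ℝ) : ℂ))
    (m := fun n z => (ArithmeticFunction.vonMangoldt n / n : ℂ) * ((n : ℂ) ^ (-z) * (1 / z ^ 2)))
    hs ?_ ?_ ?_ (hL s.re (by simpa using hs)).summable (hL s hs)
  · intro n z hz
    rcases Nat.eq_zero_or_pos n with rfl | hn
    · simp [HasMellin, MellinConvergent, mellin]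
    · have hn' : (0 : ℝ) < n := by exact_mod_cast hn
      have h1 := hasMellin_posLog_inv hz
      have h2 : HasMellin (fun u : ℝ => (Real.posLog (n * u)⁻¹ : ℂ)) z
          ((n : ℂ) ^ (-z) * (1 / z ^ 2)) := by
        refine ⟨(MellinConvergent.comp_mul_left hn').2 h1.1, ?_⟩
        have h3 := mellin_comp_mul_left (fun u => (Real.posLog u⁻¹ : ℂ)) z hn'
        rw [h3, h1.2]
        simp
      refine (h2.const_mul _).congr_of_pos fun u hu => ?_
      rw [mul_inv, mul_comm (n : ℝ)⁻¹, ← div_eq_mul_inv]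
      push_cast
      ring
  · intro n u hu
    rw [norm_real, Real.norm_of_nonneg]
    exact mul_nonneg (div_nonneg ArithmeticFunction.vonMangoldt_nonneg (Nat.cast_nonneg _))
      Real.posLog_nonneg
  · intro u hu
    exact_mod_cast hasSum_vonMangoldtLogSum (inv_pos.2 hu)

/-- `∑_k (1 - min(u,1)^(2k+3)) / (2k+3)²`. -/
noncomputable def oddTail (u : ℝ) : ℝ :=
  ∑' k : ℕ, (1 - (min u 1) ^ (2 * k + 3)) / ((2 * k + 3 : ℕ) : ℝ) ^ 2

theorem summable_odd_inv_sq : Summable fun k : ℕ => 1 / ((2 * k + 3 : ℕ) : ℝ) ^ 2 := by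
  refine (Real.summable_one_div_nat_pow.2 one_lt_two).comp_injective
    (i := fun k : ℕ => 2 * k + 3) fun a b h => ?_
  simp only at h
  omega

theorem abs_one_sub_min_pow_div_le {u : ℝ} (hu : 0 ≤ u) (k : ℕ) :
    |(1 - (min u 1) ^ (2 * k + 3)) / ((2 * k + 3 : ℕ) : ℝ) ^ 2| ≤
      1 / ((2 * k + 3 : ℕ) : ℝ) ^ 2 := by
  rw [abs_div, abs_of_nonneg (sq_nonneg (_ : ℝ))]
  have h0 : 0 ≤ min u 1 := le_min hu zero_le_one
  have h1 : (min u 1) ^ (2 * k + 3) ≤ 1 := pow_le_one₀ h0 (min_le_right _ _)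
  have h2 : 0 ≤ (min u 1) ^ (2 * k + 3) := pow_nonneg h0 _
  gcongr
  rw [abs_le]
  constructor <;> linarith

theorem hasSum_oddTail {u : ℝ} (hu : 0 ≤ u) :
    HasSum (fun k : ℕ => (1 - (min u 1) ^ (2 * k + 3)) / ((2 * k + 3 : ℕ) : ℝ) ^ 2)
      (oddTail u) :=
  (summable_odd_inv_sq.of_norm_bounded fun k => abs_one_sub_min_pow_div_le hu k).hasSum

theorem continuousOn_oddTail : ContinuousOn oddTail (Set.Ici 0) := by
  refine continuousOn_tsum (fun k => ?_) summable_odd_inv_sq fun k u hu =>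
    abs_one_sub_min_pow_div_le hu k
  fun_prop

theorem hasMellin_oddTail {s : ℂ} (hs : 0 < s.re) :
    HasMellin (fun u : ℝ => (oddTail u : ℂ)) s
      ((gammaLogDeriv (1 + s) - gammaLogDeriv 1) / s ^ 2) := by
  have hL : ∀ z : ℂ, 0 < z.re → HasSum (fun k : ℕ =>
      (1 / ((2 * k + 3 : ℕ) : ℂ) ^ 2) * (1 / z - 1 / (z + (2 * k + 3 : ℕ))))
      ((gammaLogDeriv (1 + z) - gammaLogDeriv 1) / z ^ 2) := by
    intro z hz
    refine ((hasSum_gammaLogDeriv_sub hz).div_const (z ^ 2)).of_eq fun k => ?_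
    have hz0 : z ≠ 0 := by rintro rfl; simp at hz
    have ha : ((2 * k + 3 : ℕ) : ℂ) ≠ 0 := by exact_mod_cast (by omega : 2 * k + 3 ≠ 0)
    have hb : z + ((2 * k + 3 : ℕ) : ℂ) ≠ 0 := by
      intro h
      have := congrArg re h
      rw [add_re, natCast_re, zero_re] at this
      have hk : (0 : ℝ) ≤ ((2 * k + 3 : ℕ) : ℝ) := Nat.cast_nonneg _
      linarith
    generalize ((2 * k + 3 : ℕ) : ℂ) = a at ha hb ⊢
    field_simp
    ring
  refine hasMellin_of_hasSum_of_nonneg (f := fun k u =>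
      (((1 - (min u 1) ^ (2 * k + 3)) / ((2 * k + 3 : ℕ) : ℝ) ^ 2 : ℝ) : ℂ))
    (m := fun k z => (1 / ((2 * k + 3 : ℕ) : ℂ) ^ 2) * (1 / z - 1 / (z + (2 * k + 3 : ℕ))))
    hs ?_ ?_ ?_ (hL s.re (by simpa using hs)).summable (hL s hs)
  · intro k z hz
    refine ((hasMellin_one_sub_min_pow (a := 2 * k + 3) hz).const_mul _).congr_of_pos fun u hu => ?_
    simp only [ofReal_div, ofReal_sub, ofReal_pow, ofReal_one, ofReal_natCast]
    ring
  · intro k u hu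
    rw [norm_real, Real.norm_of_nonneg]
    refine div_nonneg (sub_nonneg.2 (pow_le_one₀ ?_ (min_le_right _ _))) (sq_nonneg _)
    exact le_min hu.le zero_le_one
  · intro u hu
    exact_mod_cast hasSum_oddTail hu.le

/-- The inverse Mellin transform of `w ↦ xiKernel (1 + w)`. -/
noncomputable def xiMellin (u : ℝ) : ℂ :=
  -(vonMangoldtLogSum u⁻¹ : ℂ) + 1 / 2 * (Real.posLog u⁻¹ : ℂ) ^ 2
    - Real.eulerMascheroniConstant * (Real.posLog u⁻¹ : ℂ) + (oddTail u : ℂ)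
    - deriv (logDeriv entireXi) 1 * ((min 1 u⁻¹ : ℝ) : ℂ)

theorem hasMellin_xiMellin {w : ℂ} (h0 : 0 < w.re) (h1 : w.re < 1) :
    HasMellin xiMellin w (xiKernel (1 + w)) := by
  have hw0 : w ≠ 0 := by rintro rfl; simp at h0
  have h := (((((hasMellin_vonMangoldtLogSum h0).const_mul (-1)).add
    ((hasMellin_posLog_inv_sq h0).const_mul (1 / 2))).sub
    ((hasMellin_posLog_inv h0).const_mul Real.eulerMascheroniConstant)).add
    (hasMellin_oddTail h0)).sub
    ((hasMellin_min_one_inv h0 h1).const_mul (deriv (logDeriv entireXi) 1))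
  rw [xiKernel, logDeriv_entireXi_one_add h0]
  have h2 := h.congr_of_pos (g := xiMellin) fun u hu => by rw [xiMellin]; ring
  refine ⟨h2.1, h2.2.trans ?_⟩
  rw [show 1 + w - 1 = w by ring, show 2 - (1 + w) = 1 - w by ring]
  rw [mul_one_div (deriv (logDeriv entireXi) 1)]
  congr 1
  field_simp
  ring

theorem continuousAt_xiMellin {u : ℝ} (hu : 0 < u) : ContinuousAt xiMellin u := by
  have hi : ContinuousAt (fun u : ℝ => u⁻¹) u := continuousAt_inv₀ hu.ne'
  have h1 : ContinuousAt (fun u : ℝ => (vonMangoldtLogSum u⁻¹ : ℂ)) u :=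
    continuous_ofReal.continuousAt.comp
      (ContinuousAt.comp (f := fun u : ℝ => u⁻¹) (g := vonMangoldtLogSum)
        (continuousOn_vonMangoldtLogSum.continuousAt (Ioi_mem_nhds (inv_pos.2 hu))) hi)
  have h2 : ContinuousAt (fun u : ℝ => (Real.posLog u⁻¹ : ℂ)) u :=
    continuous_ofReal.continuousAt.comp
      (ContinuousAt.comp (f := fun u : ℝ => u⁻¹) (g := Real.posLog)
        Real.continuous_posLog.continuousAt hi)
  have h3 : ContinuousAt (fun u : ℝ => (oddTail u : ℂ)) u :=
    continuous_ofReal.continuousAt.comp (continuousOn_oddTail.continuousAt (Ici_mem_nhds hu))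
  have h4 : ContinuousAt (fun u : ℝ => ((min 1 u⁻¹ : ℝ) : ℂ)) u :=
    continuous_ofReal.continuousAt.comp (continuousAt_const.min hi)
  exact (((h1.neg.add (continuousAt_const.mul (h2.pow 2))).sub
    (continuousAt_const.mul h2)).add h3).sub (continuousAt_const.mul h4)

theorem xiMellin_inv_eq_integral (hRH : RiemannHypothesis) {x : ℝ} (hx : 1 ≤ x) :
    xiMellin x⁻¹ = (1 / (2 * Real.pi) : ℝ) •
      ∫ y : ℝ, xiKernel ((3 / 2 : ℝ) + y * I) * (x : ℂ) ^ (((3 / 2 : ℝ) : ℂ) + y * I - 1) := by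
  have hx0 : 0 < x := by linarith
  have hm : ∀ y : ℝ, mellin xiMellin ((1 / 2 : ℝ) + y * I) =
      xiKernel ((3 / 2 : ℝ) + y * I) := fun y => by
    rw [(hasMellin_xiMellin (w := (1 / 2 : ℝ) + y * I) (by simp) (by simp; norm_num)).2]
    congr 1
    push_cast
    ring
  rw [← mellinInv_mellin_eq (1 / 2) xiMellin (inv_pos.2 hx0)
    (hasMellin_xiMellin (by simp) (by simp; norm_num)).1 ?_ (continuousAt_xiMellin (inv_pos.2 hx0)),
    mellinInv]
  · congr 1
    refine integral_congr_ae (Eventually.of_forall fun y => ?_)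
    simp only [smul_eq_mul]
    rw [hm, mul_comm, ofReal_inv, inv_cpow_eq_ite, if_neg, cpow_neg, inv_inv]
    · congr 2
      push_cast
      ring
    · rw [arg_ofReal_of_nonneg hx0.le]
      exact Real.pi_pos.ne
  · refine (integrable_xiKernel hRH).congr (Eventually.of_forall fun y => ?_)
    exact (hm y).symm

theorem norm_xiMellin_inv_le (hRH : RiemannHypothesis) {x : ℝ} (hx : 1 ≤ x) :
    ‖xiMellin x⁻¹‖ ≤ 2 * xiConst * x ^ (-(1 / 2) : ℝ) := by
  have hx0 : 0 < x := by linarith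
  have h : ∀ σ : ℝ, 1 / 2 < σ → σ < 1 →
      ‖xiMellin x⁻¹‖ ≤ xiConst * x ^ (σ - 1) / (1 - σ) := fun σ h1 h2 => by
    rw [xiMellin_inv_eq_integral hRH hx, integral_xiKernel_mul_cpow hRH h1 h2 hx, norm_smul,
      Real.norm_of_nonneg (by positivity)]
    refine (mul_le_mul_of_nonneg_left (norm_integral_logDeriv_mul_cpow_le hRH h1 h2 hx)
      (by positivity)).trans_eq ?_
    have := sub_ne_zero.2 h2.ne'
    field_simp
  have ht : Tendsto (fun σ : ℝ => xiConst * x ^ (σ - 1) / (1 - σ)) (𝓝[>] (1 / 2))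
      (𝓝 (xiConst * x ^ ((1 / 2 : ℝ) - 1) / (1 - 1 / 2))) := by
    refine Tendsto.mono_left (ContinuousAt.tendsto ?_) nhdsWithin_le_nhds
    refine ContinuousAt.div ?_ (by fun_prop) (by norm_num)
    exact continuousAt_const.mul (continuousAt_const.rpow (by fun_prop) (Or.inl hx0.ne'))
  have h3 := ge_of_tendsto ht (by
    filter_upwards [Ioo_mem_nhdsGT (show (1 / 2 : ℝ) < 1 by norm_num)] with σ hσ
    exact h σ hσ.1 hσ.2)
  refine h3.trans_eq ?_
  rw [show (1 / 2 : ℝ) - 1 = -(1 / 2) by norm_num]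
  ring

theorem oddTail_zero_sub_le {x : ℝ} (hx : 100 ≤ x) :
    0 ≤ oddTail 0 - oddTail x⁻¹ ∧ oddTail 0 - oddTail x⁻¹ ≤ 0.1112 * x⁻¹ ^ 3 := by
  have hx0 : 0 < x := by linarith
  have hu0 : 0 < x⁻¹ := inv_pos.2 hx0
  have hu1 : x⁻¹ ≤ 1 / 100 := by
    rw [inv_le_comm₀ hx0 (by norm_num)]
    linarith
  have h := (hasSum_oddTail le_rfl).sub (hasSum_oddTail hu0.le)
  have e : ∀ k : ℕ, (1 - (min 0 1 : ℝ) ^ (2 * k + 3)) / ((2 * k + 3 : ℕ) : ℝ) ^ 2 -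
      (1 - (min x⁻¹ 1) ^ (2 * k + 3)) / ((2 * k + 3 : ℕ) : ℝ) ^ 2 =
      x⁻¹ ^ (2 * k + 3) / ((2 * k + 3 : ℕ) : ℝ) ^ 2 := fun k => by
    rw [min_eq_left zero_le_one, min_eq_left (by linarith), zero_pow (by omega)]
    ring
  simp only [e] at h
  refine ⟨h.nonneg fun k => by positivity, ?_⟩
  have hg : HasSum (fun k : ℕ => x⁻¹ ^ 3 / 9 * (1 / 10000 : ℝ) ^ k)
      (x⁻¹ ^ 3 / 9 * (1 - 1 / 10000)⁻¹) :=
    (hasSum_geometric_of_lt_one (by norm_num) (by norm_num)).mul_left _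
  refine (hasSum_le (fun k => ?_) h hg).trans ?_
  · rw [pow_add, pow_mul, mul_comm, div_mul_eq_mul_div]
    have h9 : (9 : ℝ) ≤ ((2 * k + 3 : ℕ) : ℝ) ^ 2 := by
      have : (3 : ℝ) ≤ ((2 * k + 3 : ℕ) : ℝ) := by exact_mod_cast (by omega : 3 ≤ 2 * k + 3)
      nlinarith
    have hsq : x⁻¹ ^ 2 ≤ 1 / 10000 := by nlinarith
    gcongr
  · have : 0 ≤ x⁻¹ ^ 3 := by positivity
    rw [div_mul_eq_mul_div, mul_div_assoc, mul_comm]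
    exact mul_le_mul_of_nonneg_right (by norm_num) this

/-- `∫ R(t)/t dt` up to an additive constant. -/
noncomputable def Rprim (x : ℝ) : ℝ :=
  vonMangoldtLogSum x - 1 / 2 * Real.log x ^ 2 + Real.eulerMascheroniConstant * Real.log x

theorem exists_abs_sub_Rprim_le (hRH : RiemannHypothesis) :
    ∃ A : ℝ, ∀ x : ℝ, 100 ≤ x → |A - Rprim x| ≤ 0.0462 / Real.sqrt x := by
  refine ⟨oddTail 0 - (deriv (logDeriv entireXi) 1).re, fun x hx => ?_⟩
  have hx0 : 0 < x := by linarith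
  have h1 := (abs_re_le_norm _).trans (norm_xiMellin_inv_le hRH (show 1 ≤ x by linarith))
  obtain ⟨h2, h3⟩ := oddTail_zero_sub_le hx
  have e : (xiMellin x⁻¹).re = -Rprim x + oddTail x⁻¹ - (deriv (logDeriv entireXi) 1).re := by
    have hp : Real.posLog x = Real.log x :=
      Real.posLog_eq_log (by rw [abs_of_pos hx0]; linarith)
    rw [xiMellin, inv_inv, hp, min_eq_left (by linarith), ofReal_one, mul_one, Rprim,
      show -(vonMangoldtLogSum x : ℂ) + 1 / 2 * (Real.log x : ℂ) ^ 2 -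
        Real.eulerMascheroniConstant * (Real.log x : ℂ) + (oddTail x⁻¹ : ℂ) =
        ((-vonMangoldtLogSum x + 1 / 2 * Real.log x ^ 2 -
          Real.eulerMascheroniConstant * Real.log x + oddTail x⁻¹ : ℝ) : ℂ) by push_cast; ring,
      sub_re, ofReal_re]
    ring
  rw [e] at h1
  have hc : 2 * xiConst ≤ 0.0461985 := by
    have := eulerMascheroniConstant_sub_log_four_pi_le
    rw [xiConst]
    linarith
  have hs : x ^ (-(1 / 2) : ℝ) = (Real.sqrt x)⁻¹ := by
    rw [Real.rpow_neg hx0.le, Real.sqrt_eq_rpow]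
  rw [hs] at h1
  have hs10 : 10 ≤ Real.sqrt x := Real.le_sqrt_of_sq_le (by linarith)
  have hsi : 0 < (Real.sqrt x)⁻¹ := by positivity
  have h4 : 2 * xiConst * (Real.sqrt x)⁻¹ ≤ 0.0461985 * (Real.sqrt x)⁻¹ :=
    mul_le_mul_of_nonneg_right hc hsi.le
  have h5 : x⁻¹ ^ 3 ≤ 0.00001 * (Real.sqrt x)⁻¹ := by
    have hx2 : x⁻¹ = (Real.sqrt x)⁻¹ ^ 2 := by rw [inv_pow, Real.sq_sqrt hx0.le]
    have hv : (Real.sqrt x)⁻¹ ≤ 1 / 10 := by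
      rw [inv_le_comm₀ (by positivity) (by norm_num)]
      linarith
    rw [hx2, ← pow_mul, show 2 * 3 = 5 + 1 by norm_num, pow_succ]
    refine mul_le_mul_of_nonneg_right ((pow_le_pow_left₀ hsi.le hv 5).trans ?_) hsi.le
    norm_num
  rw [div_eq_mul_inv]
  rw [abs_le] at h1 ⊢
  constructor <;> linarith [h1.1, h1.2]

theorem continuousOn_Rprim : ContinuousOn Rprim (Set.Ioi 0) := by
  have h : ContinuousOn Real.log (Set.Ioi 0) :=
    Real.continuousOn_log.mono fun t ht => ne_of_gt ht
  exact (continuousOn_vonMangoldtLogSum.sub (continuousOn_const.mul (h.pow 2))).add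
    (continuousOn_const.mul h)

theorem hasDerivWithinAt_Rprim {t : ℝ} (ht : 0 < t) :
    HasDerivWithinAt Rprim (Rfun t / t) (Set.Ioi t) t := by
  have hv : ∀ s : ℝ, t ≤ s → s < ⌊t⌋₊ + 1 → vonMangoldtLogSum s =
      ∑ n ∈ Finset.Icc 1 ⌊t⌋₊, ArithmeticFunction.vonMangoldt n / n * Real.log (s / n) := by
    intro s h1 h2
    rw [vonMangoldtLogSum, (Nat.floor_eq_iff (ht.le.trans h1)).2
      ⟨(Nat.floor_le ht.le).trans h1, h2⟩]
  have h1 : HasDerivAt (fun s : ℝ =>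
      ∑ n ∈ Finset.Icc 1 ⌊t⌋₊, ArithmeticFunction.vonMangoldt n / n * Real.log (s / n))
      (∑ n ∈ Finset.Icc 1 ⌊t⌋₊, ArithmeticFunction.vonMangoldt n / n * t⁻¹) t := by
    refine HasDerivAt.fun_sum fun n hn => HasDerivAt.const_mul _ ?_
    have hn0 : (n : ℝ) ≠ 0 := by
      have := (Finset.mem_Icc.1 hn).1
      positivity
    have h2 := ((hasDerivAt_id t).div_const (n : ℝ)).log (div_ne_zero ht.ne' hn0)
    refine h2.congr_deriv ?_
    simp only [id]
    field_simp
  have h2 := (h1.hasDerivWithinAt (s := Set.Ioi t)).congr_of_eventuallyEq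
    (f₁ := vonMangoldtLogSum) (by
      filter_upwards [Ioo_mem_nhdsGT (Nat.lt_floor_add_one t)] with s hs
      exact hv s hs.1.le hs.2) (hv t le_rfl (Nat.lt_floor_add_one t))
  have h3 := (Real.hasDerivAt_log ht.ne').hasDerivWithinAt (s := Set.Ioi t)
  refine ((h2.sub ((h3.pow 2).const_mul (1 / 2))).add
    (h3.const_mul Real.eulerMascheroniConstant)).congr_deriv ?_
  rw [Rfun, ← Finset.sum_mul]
  simp only [Nat.cast_ofNat, Nat.add_one_sub_one, pow_one]
  ring

theorem intervalIntegral_Rfun_div_eq {A x X : ℝ} (hx : 1 < x) (hX : x ≤ X)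
    (hi : IntegrableOn (fun t => Rfun t / (t * Real.log t ^ 2)) (Set.Ioi x)) :
    ∫ t in x..X, Rfun t / (t * Real.log t ^ 2) =
      (Rprim X - A) / Real.log X ^ 2 - (Rprim x - A) / Real.log x ^ 2 +
        ∫ t in x..X, 2 * (Rprim t - A) / (t * Real.log t ^ 3) := by
  have hlog : ∀ t ∈ Set.Icc x X, 0 < Real.log t := fun t ht =>
    Real.log_pos (hx.trans_le ht.1)
  have hpos : ∀ t ∈ Set.Icc x X, 0 < t := fun t ht => by linarith [ht.1]
  have hcR : ContinuousOn (fun t => Rprim t - A) (Set.Icc x X) :=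
    (continuousOn_Rprim.mono fun t ht => hpos t ht).sub continuousOn_const
  have hcl : ContinuousOn Real.log (Set.Icc x X) :=
    Real.continuousOn_log.mono fun t ht => (hpos t ht).ne'
  have hi1 : IntervalIntegrable (fun t => Rfun t / (t * Real.log t ^ 2)) volume x X :=
    (intervalIntegrable_iff_integrableOn_Ioc_of_le hX).2 (hi.mono_set Set.Ioc_subset_Ioi_self)
  have hi2 : IntervalIntegrable (fun t => 2 * (Rprim t - A) / (t * Real.log t ^ 3)) volume x X := by
    refine ContinuousOn.intervalIntegrable ?_
    rw [Set.uIcc_of_le hX]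
    exact (continuousOn_const.mul hcR).div (continuousOn_id.mul (hcl.pow 3)) fun t ht =>
      (mul_pos (hpos t ht) (pow_pos (hlog t ht) 3)).ne'
  rw [← sub_eq_iff_eq_add, ← intervalIntegral.integral_sub hi1 hi2]
  refine intervalIntegral.integral_eq_sub_of_hasDeriv_right
    (f := fun t => (Rprim t - A) / Real.log t ^ 2) ?_ ?_ (hi1.sub hi2)
  · rw [Set.uIcc_of_le hX]
    exact hcR.div (hcl.pow 2) fun t ht => (pow_pos (hlog t ht) 2).ne'
  · rw [min_eq_left hX, max_eq_right hX]
    intro t ht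
    have ht0 := hpos t (Set.Ioo_subset_Icc_self ht)
    have hl0 := hlog t (Set.Ioo_subset_Icc_self ht)
    have h3 := (Real.hasDerivAt_log ht0.ne').hasDerivWithinAt (s := Set.Ioi t)
    refine (((hasDerivWithinAt_Rprim ht0).sub_const A).fun_div (h3.fun_pow 2)
      (pow_pos hl0 2).ne').congr_deriv ?_
    field_simp
    ring

theorem intervalIntegral_inv_mul_inv_sqrt_le {x X : ℝ} (hx : 0 < x) (hX : x ≤ X) :
    IntervalIntegrable (fun t : ℝ => t⁻¹ * (Real.sqrt t)⁻¹) volume x X ∧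
      ∫ t in x..X, t⁻¹ * (Real.sqrt t)⁻¹ ≤ 2 / Real.sqrt x := by
  have hi : IntervalIntegrable (fun t : ℝ => t⁻¹ * (Real.sqrt t)⁻¹) volume x X := by
    refine ContinuousOn.intervalIntegrable ?_
    rw [Set.uIcc_of_le hX]
    intro t ht
    have h0 : 0 < t := hx.trans_le ht.1
    exact ((continuousAt_inv₀ h0.ne').mul (Real.continuous_sqrt.continuousAt.inv₀
      (Real.sqrt_pos.2 h0).ne')).continuousWithinAt
  refine ⟨hi, ?_⟩
  rw [intervalIntegral.integral_eq_sub_of_hasDerivAt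
    (f := fun t => -2 * (Real.sqrt t)⁻¹) (fun t ht => ?_) hi]
  · have : 0 ≤ (Real.sqrt X)⁻¹ := by positivity
    rw [div_eq_mul_inv]
    linarith
  · rw [Set.uIcc_of_le hX] at ht
    have h0 : 0 < t := hx.trans_le ht.1
    have h1 : 0 < Real.sqrt t := Real.sqrt_pos.2 h0
    refine (((Real.hasDerivAt_sqrt h0.ne').fun_inv h1.ne').const_mul (-2)).congr_deriv ?_
    have h2 : t = Real.sqrt t ^ 2 := (Real.sq_sqrt h0.le).symm
    field_simp
    linarith

/-- On RH, `|H(x)| ≤ (0.0462/(√x (log x)^2)) (1 + 4/log x)` for `x ≥ 100`. -/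
theorem Hfun_bound_of_RH (hRH : RiemannHypothesis) (x : ℝ) (hx : 100 ≤ x) :
    |Hfun x| ≤ 0.0462 / (Real.sqrt x * (Real.log x) ^ 2) * (1 + 4 / Real.log x) := by
  have hx0 : 0 < x := by linarith
  have hl : 0 < Real.log x := Real.log_pos (by linarith)
  have hs : 0 < Real.sqrt x := Real.sqrt_pos.2 hx0
  by_cases hi : IntegrableOn (fun t => Rfun t / (t * Real.log t ^ 2)) (Set.Ioi x)
  swap
  · rw [Hfun, integral_undef hi, abs_zero]
    positivity
  obtain ⟨A, hA⟩ := exists_abs_sub_Rprim_le hRH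
  have hA' : ∀ t, x ≤ t → |Rprim t - A| ≤ 0.0462 / Real.sqrt t := fun t ht => by
    rw [abs_sub_comm]
    exact hA t (hx.trans ht)
  have hG : ∀ t, x ≤ t → |(Rprim t - A) / Real.log t ^ 2| ≤
      0.0462 / Real.log x ^ 2 * (Real.sqrt t)⁻¹ := fun t ht => by
    have h1 : Real.log x ≤ Real.log t := Real.log_le_log hx0 ht
    rw [abs_div, abs_of_nonneg (sq_nonneg (Real.log t)), div_mul_eq_mul_div, ← div_eq_mul_inv]
    have := hA' t ht
    gcongr
  have hE : ∀ X, x ≤ X → |∫ t in x..X, 2 * (Rprim t - A) / (t * Real.log t ^ 3)| ≤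
      2 * 0.0462 / Real.log x ^ 3 * (2 / Real.sqrt x) := fun X hX => by
    obtain ⟨h1, h2⟩ := intervalIntegral_inv_mul_inv_sqrt_le hx0 hX
    rw [← Real.norm_eq_abs]
    refine (intervalIntegral.norm_integral_le_of_norm_le hX (Eventually.of_forall fun t ht => ?_)
      (h1.const_mul (2 * 0.0462 / Real.log x ^ 3))).trans ?_
    · have h3 : Real.log x ≤ Real.log t := Real.log_le_log hx0 ht.1.le
      have h4 : 0 < t := hx0.trans ht.1
      have h5 := hA' t ht.1.le
      have h6 : 0 < Real.sqrt t := Real.sqrt_pos.2 h4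
      rw [Real.norm_eq_abs, abs_div, abs_mul, abs_two,
        abs_of_pos (mul_pos h4 (pow_pos (hl.trans_le h3) 3))]
      calc 2 * |Rprim t - A| / (t * Real.log t ^ 3)
          ≤ 2 * (0.0462 / Real.sqrt t) / (t * Real.log x ^ 3) := by gcongr
        _ = _ := by field_simp
    · rw [intervalIntegral.integral_const_mul]
      exact mul_le_mul_of_nonneg_left h2 (by positivity)
  have hlim := (intervalIntegral_tendsto_integral_Ioi x hi tendsto_id).abs
  have hz : Tendsto (fun X => 0.0462 / Real.log x ^ 2 * (Real.sqrt X)⁻¹ +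
      (0.0462 / Real.log x ^ 2 * (Real.sqrt x)⁻¹ +
        2 * 0.0462 / Real.log x ^ 3 * (2 / Real.sqrt x))) atTop
      (𝓝 (0.0462 / Real.log x ^ 2 * 0 + (0.0462 / Real.log x ^ 2 * (Real.sqrt x)⁻¹ +
        2 * 0.0462 / Real.log x ^ 3 * (2 / Real.sqrt x)))) :=
    ((tendsto_inv_atTop_zero.comp Real.tendsto_sqrt_atTop).const_mul _).add tendsto_const_nhds
  refine (le_of_tendsto_of_tendsto hlim hz ?_).trans_eq ?_
  · filter_upwards [eventually_ge_atTop x] with X hX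
    rw [id, intervalIntegral_Rfun_div_eq (A := A) (by linarith) hX hi]
    have h1 := hG X hX
    have h2 := hG x le_rfl
    have h3 := hE X hX
    rw [abs_le] at h1 h2 h3 ⊢
    constructor <;> linarith [h1.1, h1.2, h2.1, h2.2, h3.1, h3.2]
  · field_simp
    ring
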